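/- arXiv:1511.06808 — 2 statements merged into one kernel-verified Lean document; each statement's English description precedes it below -/
import Mathlib

section
/- Let D be a face-convex good drawing of K_n in the sphere with outer face F, and let J be a K_4 subgraph of K_n whose drawing D[J] has a crossing, with the four vertices labelled v, w, x, y so that the edge-arcs D[vw] and D[xy] cross. Then F is contained in the face of D[J] bounded by the 4-cycle (v, x, w, y, v). -/
open Set Topology

noncomputable section

abbrev Plane : Type := EuclideanSpace ℝ (Fin 2)

abbrev SpherePt : Type := ↥(Metric.sphere (0 : EuclideanSpace ℝ (Fin 3)) 1)

/-- `γ` crosses the curve `σ` at `p`: `p` lies on both sets, and in every neighbourhood of `p`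
there is a smaller neighbourhood `V` such that `V \ σ` splits into two connected "sides",
both of which meet `γ`. -/
def CrossesAt {X : Type*} [TopologicalSpace X] (σ γ : Set X) (p : X) : Prop :=
  p ∈ σ ∧ p ∈ γ ∧ ∀ U ∈ nhds p, ∃ V ∈ nhds p, V ⊆ U ∧
    ∃ C₁ C₂ : Set X, V \ σ = C₁ ∪ C₂ ∧ Disjoint C₁ C₂ ∧
      IsPreconnected C₁ ∧ IsPreconnected C₂ ∧ (γ ∩ C₁).Nonempty ∧ (γ ∩ C₂).Nonempty

/-- `Δ` is one of the closed regions ("closed discs") bounded by the curve `C`: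
it is the union of `C` with a connected component of the complement of `C`. -/
def IsClosedSide {X : Type*} [TopologicalSpace X] (C Δ : Set X) : Prop :=
  ∃ q, q ∉ C ∧ Δ = connectedComponentIn Cᶜ q ∪ C

/-- `Δ` is one of the open regions ("open discs") bounded by the curve `C`. -/
def IsOpenSide {X : Type*} [TopologicalSpace X] (C Δ : Set X) : Prop :=
  ∃ q, q ∉ C ∧ Δ = connectedComponentIn Cᶜ q

/-- `G` is a face (a connected component of the complement) of the point set `A`. -/
def IsFaceOf {X : Type*} [TopologicalSpace X] (A G : Set X) : Prop :=
  ∃ q, q ∉ A ∧ G = connectedComponentIn Aᶜ q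

/-- A good drawing of the complete graph `K_n` in the space `X`. -/
structure GoodDrawing (n : ℕ) (X : Type*) [TopologicalSpace X] where
  vtx : Fin n → X
  arc : Fin n → Fin n → Set X
  vtx_inj : Function.Injective vtx
  arc_symm : ∀ u v, arc u v = arc v u
  isArc : ∀ u v, u ≠ v → ∃ f : ℝ → X, ContinuousOn f (Set.Icc 0 1) ∧
    Set.InjOn f (Set.Icc 0 1) ∧ f 0 = vtx u ∧ f 1 = vtx v ∧ arc u v = f '' Set.Icc 0 1
  vtx_not_mem : ∀ u v w, u ≠ v → w ≠ u → w ≠ v → vtx w ∉ arc u v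
  adj_arcs : ∀ u v w, u ≠ v → u ≠ w → v ≠ w → arc u v ∩ arc u w = {vtx u}
  indep_arcs : ∀ u v x y : Fin n, u ≠ v → x ≠ y → u ≠ x → u ≠ y → v ≠ x → v ≠ y →
    (arc u v ∩ arc x y).Subsingleton ∧
      ∀ p ∈ arc u v ∩ arc x y,
        CrossesAt (arc u v) (arc x y) p ∧ CrossesAt (arc x y) (arc u v) p
  no_triple_pt : ∀ p : X, p ∉ Set.range vtx → ∀ u v x y s t : Fin n,
    u ≠ v → x ≠ y → s ≠ t →
    ({u, v} : Finset (Fin n)) ≠ {x, y} → ({u, v} : Finset (Fin n)) ≠ {s, t} →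
    ({x, y} : Finset (Fin n)) ≠ {s, t} →
    ¬(p ∈ arc u v ∧ p ∈ arc x y ∧ p ∈ arc s t)

namespace GoodDrawing

variable {n : ℕ} {X : Type*} [TopologicalSpace X]

/-- The point set of the subdrawing induced by the set `W` of vertices. -/
def image (D : GoodDrawing n X) (W : Set (Fin n)) : Set X :=
  (D.vtx '' W) ∪ ⋃ u ∈ W, ⋃ v ∈ W, ⋃ (_ : u ≠ v), D.arc u v

/-- The simple closed curve that is the drawing of the 3-cycle on `a`, `b`, `c`. -/
def tri (D : GoodDrawing n X) (a b c : Fin n) : Set X :=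
  D.arc a b ∪ D.arc b c ∪ D.arc a c

/-- `Δ` is convex: it contains the arc between any two vertex points it contains. -/
def ConvexDisc (D : GoodDrawing n X) (Δ : Set X) : Prop :=
  ∀ x y : Fin n, x ≠ y → D.vtx x ∈ Δ → D.vtx y ∈ Δ → D.arc x y ⊆ Δ

/-- `F` is a face of the drawing `D`. -/
def IsFace (D : GoodDrawing n X) (F : Set X) : Prop :=
  IsFaceOf (D.image Set.univ) F

/-- `D` is face-convex with outer face `F`. -/
def FaceConvex (D : GoodDrawing n X) (F : Set X) : Prop :=
  D.IsFace F ∧ ∀ a b c : Fin n, a ≠ b → a ≠ c → b ≠ c →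
    ∀ Δ : Set X, IsClosedSide (D.tri a b c) Δ → ¬F ⊆ Δ → D.ConvexDisc Δ

/-- `D` is a convex drawing: every 3-cycle has at least one convex closed side. -/
def IsConvex (D : GoodDrawing n X) : Prop :=
  ∀ a b c : Fin n, a ≠ b → a ≠ c → b ≠ c →
    ∃ Δ : Set X, IsClosedSide (D.tri a b c) Δ ∧ D.ConvexDisc Δ

/-- The closed curve drawn by the cycle `c 0, c 1, …, c (m-1), c 0` of `K_n`. -/
def cycCurve (D : GoodDrawing n X) {m : ℕ} [NeZero m] (c : Fin m → Fin n) : Set X :=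
  ⋃ i : Fin m, D.arc (c i) (c (i + 1))

/-- `Δ` is the convex hull `Δ_W` of the vertex set `W` (relative to the outer face `F`):
the face of the subdrawing `D[W]` containing `F` is bounded by a cycle `C_W` on vertices
of `W`, and `Δ` is the closed disc bounded by `D[C_W]` disjoint from `F`. -/
def IsHull (D : GoodDrawing n X) (F : Set X) (W : Set (Fin n)) (Δ : Set X) : Prop :=
  ∃ (m : ℕ) (c : Fin (m + 3) → Fin n), Function.Injective c ∧ (∀ i, c i ∈ W) ∧
    (∃ G : Set X, IsFaceOf (D.image W) G ∧ F ⊆ G ∧ frontier G = D.cycCurve c) ∧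
    IsClosedSide (D.cycCurve c) Δ ∧ Disjoint F Δ

/-- The data of the two local sides `C 0`, `C 1` of the arc `D[uv]` at an interior
point `p` of the arc. -/
def LocalSides (D : GoodDrawing n X) (u v : Fin n) (p : X) (C : Fin 2 → Set X) : Prop :=
  p ∈ D.arc u v ∧ p ≠ D.vtx u ∧ p ≠ D.vtx v ∧
    ∃ V ∈ nhds p, C 0 ∪ C 1 = V \ D.arc u v ∧ Disjoint (C 0) (C 1) ∧
      IsPreconnected (C 0) ∧ IsPreconnected (C 1) ∧ (C 0).Nonempty ∧ (C 1).Nonempty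

/-- Relative to the outer face `F` and the local sides `C` of `D[uv]` at `p`, the
vertex `w` is on side `i` of `uv`: the closed disc bounded by `D[{u,v,w}]` not
containing `F` lies locally on side `i` of `D[uv]`. -/
def OnSide (D : GoodDrawing n X) (F : Set X) (u v : Fin n) (p : X) (C : Fin 2 → Set X)
    (i : Fin 2) (w : Fin n) : Prop :=
  w ≠ u ∧ w ≠ v ∧ ∃ Δ : Set X, IsClosedSide (D.tri u v w) Δ ∧ ¬F ⊆ Δ ∧
    ∃ V ∈ nhds p, C i ∩ V ⊆ Δ

/-- `Side(uv, i)`: the set consisting of `u`, `v` and all vertices on side `i` of `uv`. -/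
def SideSet (D : GoodDrawing n X) (F : Set X) (u v : Fin n) (p : X) (C : Fin 2 → Set X)
    (i : Fin 2) : Set (Fin n) :=
  {u, v} ∪ {w : Fin n | D.OnSide F u v p C i w}

/-- The edge-arcs `D[uv]` and `D[xy]` cross: they share a non-vertex point. -/
def Crosses (D : GoodDrawing n X) (u v x y : Fin n) : Prop :=
  ∃ p : X, p ∈ D.arc u v ∩ D.arc x y ∧ p ∉ Set.range D.vtx

/-- The set of empty triangles of `D`: pairs of a 3-set of vertices together with an
open disc bounded by the corresponding triangle containing no vertex point. -/
def emptyTriangles (D : GoodDrawing n X) : Set (Finset (Fin n) × Set X) :=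
  {T | ∃ a b c : Fin n, a ≠ b ∧ a ≠ c ∧ b ≠ c ∧ T.1 = {a, b, c} ∧
    IsOpenSide (D.tri a b c) T.2 ∧ ∀ i, D.vtx i ∉ T.2}

end GoodDrawing

/-- A pseudoline in the plane. -/
def IsPseudoline (σ : Set Plane) : Prop :=
  IsClosed σ ∧ Nonempty (↥σ ≃ₜ ℝ) ∧ ¬IsPreconnected σᶜ

/-- An arrangement of pseudolines: any two distinct members meet in exactly one
point, at which they cross. -/
def IsArrangement (A : Finset (Set Plane)) : Prop :=
  (∀ σ ∈ A, IsPseudoline σ) ∧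
    ∀ σ ∈ A, ∀ τ ∈ A, σ ≠ τ →
      ∃ p : Plane, σ ∩ τ = {p} ∧ CrossesAt σ τ p ∧ CrossesAt τ σ p

/-- A planar good drawing of `K_n` is pseudolinear if some arrangement of pseudolines
contains, for each edge, a distinct pseudoline containing that edge-arc. -/
def GoodDrawing.Pseudolinear {n : ℕ} (D : GoodDrawing n Plane) : Prop :=
  ∃ (A : Finset (Set Plane)) (L : Fin n → Fin n → Set Plane), IsArrangement A ∧
    (∀ u v, u ≠ v → L u v ∈ A ∧ D.arc u v ⊆ L u v) ∧
    (∀ u v, L u v = L v u) ∧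
    ∀ u v x y : Fin n, u ≠ v → x ≠ y →
      ({u, v} : Finset (Fin n)) ≠ {x, y} → L u v ≠ L x y

/-- `f` has a continuous logarithm on `K`. -/
def HasLog {X : Type*} [TopologicalSpace X] (K : Set X) (f : X → ℂ) : Prop :=
  ∃ g : X → ℂ, ContinuousOn g K ∧ ∀ z ∈ K, Complex.exp (g z) = f z

section HasLogBasic
variable {X : Type*} [TopologicalSpace X] {K A B : Set X} {f h : X → ℂ}

lemma HasLog.mono (hf : HasLog K f) (hA : A ⊆ K) : HasLog A f := by
  obtain ⟨g, hg, he⟩ := hf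
  exact ⟨g, hg.mono hA, fun z hz => he z (hA hz)⟩

lemma HasLog.congr (hf : HasLog K f) (hh : ∀ z ∈ K, h z = f z) : HasLog K h := by
  obtain ⟨g, hg, he⟩ := hf
  exact ⟨g, hg, fun z hz => by rw [he z hz, hh z hz]⟩

lemma HasLog.mul (hf : HasLog K f) (hh : HasLog K h) : HasLog K (fun z => f z * h z) := by
  obtain ⟨g, hg, he⟩ := hf
  obtain ⟨g', hg', he'⟩ := hh
  exact ⟨fun z => g z + g' z, hg.add hg', fun z hz => by rw [Complex.exp_add, he z hz, he' z hz]⟩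

lemma hasLog_const (K : Set X) {c : ℂ} (hc : c ≠ 0) : HasLog K (fun _ => c) :=
  ⟨fun _ => Complex.log c, continuousOn_const, fun _ _ => Complex.exp_log hc⟩

lemma hasLog_of_slit (hf : ContinuousOn f K) (hs : ∀ z ∈ K, f z ∈ Complex.slitPlane) :
    HasLog K f :=
  ⟨fun z => Complex.log (f z), hf.clog hs,
    fun z hz => Complex.exp_log (Complex.slitPlane_ne_zero (hs z hz))⟩

lemma HasLog.comp {Y : Type*} [TopologicalSpace Y] {K' : Set Y} {φ : Y → X} (hf : HasLog K f)
    (hφ : ContinuousOn φ K') (hm : MapsTo φ K' K) : HasLog K' (f ∘ φ) := by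
  obtain ⟨g, hg, he⟩ := hf
  exact ⟨g ∘ φ, hg.comp hφ hm, fun z hz => he _ (hm hz)⟩

lemma two_pi_I_ne : (2 * Real.pi * Complex.I : ℂ) ≠ 0 := by
  simp [Real.pi_ne_zero]

lemma exists_int_diff {g₁ g₂ : X → ℂ} (h₁ : ContinuousOn g₁ K) (h₂ : ContinuousOn g₂ K)
    (he : ∀ z ∈ K, Complex.exp (g₁ z) = Complex.exp (g₂ z)) :
    ∃ n : X → ℤ, ContinuousOn n K ∧
      ∀ z ∈ K, g₁ z = g₂ z + n z * (2 * Real.pi * Complex.I) := by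
  have key : ∀ z ∈ K, ∃ n : ℤ, g₁ z = g₂ z + n * (2 * Real.pi * Complex.I) := fun z hz =>
    Complex.exp_eq_exp_iff_exists_int.1 (he z hz)
  classical
  choose! n hn using key
  refine ⟨n, ?_, hn⟩
  rw [Int.isClosedEmbedding_coe_real.isInducing.continuousOn_iff]
  have : ContinuousOn (fun z => ((g₁ z - g₂ z) / (2 * Real.pi * Complex.I)).re) K :=
    Complex.continuous_re.comp_continuousOn ((h₁.sub h₂).div_const _)
  refine this.congr fun z hz => ?_
  have : (g₁ z - g₂ z) / (2 * Real.pi * Complex.I) = (n z : ℂ) := by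
    rw [hn z hz, add_sub_cancel_left, mul_div_cancel_right₀ _ two_pi_I_ne]
  simp [this]

lemma exists_glue {Y : Type*} [TopologicalSpace Y] {g₁ g₂ : X → Y} (hA : IsClosed A)
    (hB : IsClosed B)
    (h₁ : ContinuousOn g₁ A) (h₂ : ContinuousOn g₂ B) (he : ∀ z ∈ A ∩ B, g₁ z = g₂ z) :
    ∃ g : X → Y, ContinuousOn g (A ∪ B) ∧ (∀ z ∈ A, g z = g₁ z) ∧ ∀ z ∈ B, g z = g₂ z := by
  classical
  have e1 : ∀ z ∈ A, (if z ∈ A then g₁ z else g₂ z) = g₁ z := fun z hz => by simp [hz]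
  have e2 : ∀ z ∈ B, (if z ∈ A then g₁ z else g₂ z) = g₂ z := fun z hz => by
    by_cases h : z ∈ A
    · simp [h, he z ⟨h, hz⟩]
    · simp [h]
  exact ⟨fun z => if z ∈ A then g₁ z else g₂ z,
    (h₁.congr e1).union_of_isClosed (h₂.congr e2) hA hB, e1, e2⟩

lemma HasLog.glue (hA : IsClosed A) (hB : IsClosed B) (h₁ : HasLog A f) (h₂ : HasLog B f)
    (hAB : IsPreconnected (A ∩ B)) : HasLog (A ∪ B) f := by
  obtain ⟨g₁, c₁, e₁⟩ := h₁
  obtain ⟨g₂, c₂, e₂⟩ := h₂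
  obtain ⟨n, hn, hd⟩ := exists_int_diff (K := A ∩ B) (c₁.mono inter_subset_left)
    (c₂.mono inter_subset_right) (fun z hz => by rw [e₁ z hz.1, e₂ z hz.2])
  obtain ⟨m, hm⟩ : ∃ m : ℤ, ∀ z ∈ A ∩ B, n z = m := by
    rcases (A ∩ B).eq_empty_or_nonempty with h | ⟨w, hw⟩
    · exact ⟨0, by simp [h]⟩
    · exact ⟨n w, fun z hz => hAB.constant hn hz hw⟩
  obtain ⟨g, hg, ea, eb⟩ := exists_glue hA hB c₁
    (g₂ := fun z => g₂ z + m * (2 * Real.pi * Complex.I)) (c₂.add continuousOn_const)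
    (fun z hz => by rw [hd z hz, hm z hz])
  refine ⟨g, hg, ?_⟩
  rintro z (hz | hz)
  · rw [ea z hz, e₁ z hz]
  · rw [eb z hz, Complex.exp_add, Complex.exp_int_mul_two_pi_mul_I, mul_one, e₂ z hz]

end HasLogBasic

lemma div_mem_slitPlane {a b : ℂ} (hb : b ≠ 0) (h : ‖a - b‖ < ‖b‖) : a / b ∈ Complex.slitPlane := by
  have : a / b = 1 + (a - b) / b := by field_simp; ring
  rw [this]
  apply Complex.mem_slitPlane_of_norm_lt_one
  rw [norm_div, div_lt_one (norm_pos_iff.2 hb)]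
  exact h

lemma hasLog_star {E : Type*} [NormedAddCommGroup E] [NormedSpace ℝ E] {K : Set E} {f : E → ℂ}
    (hK : IsCompact K) (hs : ∀ z ∈ K, ∀ t : ℝ, 0 ≤ t → t ≤ 1 → t • z ∈ K)
    (hf : ContinuousOn f K) (h0 : ∀ z ∈ K, f z ≠ 0) : HasLog K f := by
  rcases K.eq_empty_or_nonempty with rfl | hne
  · exact ⟨fun _ => 0, continuousOn_const, by simp⟩
  have hz0 : (0 : E) ∈ K := by
    obtain ⟨z, hz⟩ := hne
    simpa using hs z hz 0 le_rfl zero_le_one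
  obtain ⟨w, hw, hmin⟩ := hK.exists_isMinOn hne hf.norm
  have hm : 0 < ‖f w‖ := norm_pos_iff.2 (h0 w hw)
  have huc := hK.uniformContinuousOn_of_continuous hf
  obtain ⟨δ, hδ, hd⟩ := Metric.uniformContinuousOn_iff.1 huc _ hm
  obtain ⟨R, hR⟩ := hK.isBounded.exists_norm_le
  obtain ⟨N, hN⟩ := exists_nat_gt (max R 0 / δ)
  have hNpos : (0 : ℝ) < N := lt_of_le_of_lt (by positivity) hN
  have mem : ∀ k ≤ N, ∀ z ∈ K, ((k : ℝ) / N) • z ∈ K := fun k hk z hz =>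
    hs z hz _ (by positivity) (by rw [div_le_one hNpos]; exact_mod_cast hk)
  have slit : ∀ k < N, ∀ z ∈ K,
      f ((((k + 1 : ℕ) : ℝ) / N) • z) / f (((k : ℝ) / N) • z) ∈ Complex.slitPlane := by
    intro k hk z hz
    have m1 := mem (k + 1) hk z hz
    have m2 := mem k hk.le z hz
    apply div_mem_slitPlane (h0 _ m2)
    refine lt_of_lt_of_le ?_ (hmin m2)
    rw [← dist_eq_norm]
    apply hd _ m1 _ m2
    rw [dist_eq_norm, ← sub_smul, norm_smul, Real.norm_eq_abs]
    have : (((k + 1 : ℕ) : ℝ) / N - (k : ℝ) / N) = 1 / N := by push_cast; ring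
    rw [this, abs_of_pos (by positivity)]
    have h1 : ‖z‖ ≤ max R 0 := (hR z hz).trans (le_max_left _ _)
    rw [div_lt_iff₀ hδ] at hN
    rw [one_div, inv_mul_lt_iff₀ hNpos]
    linarith
  have cont : ∀ k ≤ N, ContinuousOn (fun z => f (((k : ℝ) / N) • z)) K := fun k hk =>
    hf.comp (continuous_const_smul _).continuousOn (mem k hk)
  refine ⟨fun z => Complex.log (f 0) + ∑ k ∈ Finset.range N,
    Complex.log (f ((((k + 1 : ℕ) : ℝ) / N) • z) / f (((k : ℝ) / N) • z)), ?_, ?_⟩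
  · refine continuousOn_const.add (continuousOn_finsetSum _ fun k hk => ?_)
    rw [Finset.mem_range] at hk
    exact ((cont (k + 1) hk).div (cont k hk.le) fun z hz => h0 _ (mem k hk.le z hz)).clog (slit k hk)
  · intro z hz
    rw [Complex.exp_add, Complex.exp_log (h0 _ hz0), Complex.exp_sum]
    have : ∀ M ≤ N, f 0 * ∏ k ∈ Finset.range M, Complex.exp (Complex.log
        (f ((((k + 1 : ℕ) : ℝ) / N) • z) / f (((k : ℝ) / N) • z))) = f (((M : ℝ) / N) • z) := by
      intro M
      induction M with
      | zero => intro _; simp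
      | succ M ih =>
        intro hM
        rw [Finset.prod_range_succ, ← mul_assoc, ih (by omega),
          Complex.exp_log (Complex.slitPlane_ne_zero (slit M hM z hz)),
          mul_div_cancel₀ _ (h0 _ (mem M (by omega) z hz))]
    rw [this N le_rfl, div_self hNpos.ne', one_smul]

lemma not_hasLog_sphere {R : ℝ} (hR : 0 < R) :
    ¬ HasLog (Metric.sphere (0 : ℂ) R) (fun z => z) := by
  rintro ⟨g, hg, he⟩
  let c : ℝ → ℂ := fun t => R * Complex.exp (t * Complex.I)
  have hc : Continuous c := by fun_prop
  have hmem : ∀ t, c t ∈ Metric.sphere (0 : ℂ) R := fun t => by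
    simp [c, Complex.norm_exp_ofReal_mul_I, abs_of_pos hR]
  have h1 : ContinuousOn (fun t => g (c t)) univ :=
    hg.comp hc.continuousOn fun t _ => hmem t
  have h2 : ContinuousOn (fun t : ℝ => Complex.log R + t * Complex.I) univ := by fun_prop
  have hR' : (R : ℂ) ≠ 0 := by exact_mod_cast hR.ne'
  obtain ⟨n, hn, hd⟩ := exists_int_diff h1 h2 (fun t _ => by
    rw [he _ (hmem t), Complex.exp_add, Complex.exp_log hR'])
  have h3 := hd 0 trivial
  have h4 := hd (2 * Real.pi) trivial
  have h5 : c (2 * Real.pi) = c 0 := by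
    simp [c, Complex.exp_two_pi_mul_I]
  have h6 : n 0 = n (2 * Real.pi) := isPreconnected_univ.constant hn trivial trivial
  rw [h5, h3, h6] at h4
  have h7 : (2 * Real.pi * Complex.I : ℂ) = 0 := by
    push_cast at h4
    linear_combination -h4
  exact two_pi_I_ne h7

lemma step_induction {K : Set ℝ} {k : ℝ → ℤ} {a b : ℝ} (hab : a ≤ b) (hK : IsClosed K)
    (hk : ContinuousOn k (K ∩ Icc a b)) (P : (ℝ → ℤ) → Prop) (hconst : ∀ m : ℤ, P (fun _ => m))
    (hstep : ∀ (l : ℝ → ℤ) (c : ℝ) (m : ℤ), P l → c ∈ Icc a b → c ∉ K →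
      P (fun t => l t + if t < c then 0 else m)) :
    ∃ l, P l ∧ ∀ s ∈ K ∩ Icc a b, l s = k s := by
  have hcomp : IsCompact (K ∩ Icc a b) := isCompact_Icc.inter_left hK
  obtain ⟨δ, hδ, hd⟩ := Metric.uniformContinuousOn_iff.1
    (hcomp.uniformContinuousOn_of_continuous hk) 1 one_pos
  have hd' : ∀ s ∈ K ∩ Icc a b, ∀ t ∈ K ∩ Icc a b, |s - t| < δ → k s = k t := by
    intro s hs t ht hst
    have := hd s hs t ht hst
    rw [Int.dist_eq] at this
    have h2 : |k s - k t| < 1 := by exact_mod_cast this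
    rw [Int.abs_lt_one_iff] at h2
    omega
  have main : ∀ j : ℕ, ∃ l, P l ∧ (∀ s ∈ K ∩ Icc a b, s ≤ a + j * (δ / 2) → l s = k s) ∧
      ∃ κ, ∀ s, a + j * (δ / 2) ≤ s → l s = κ := by
    intro j
    induction j with
    | zero =>
      refine ⟨fun _ => k a, hconst _, ?_, k a, fun _ _ => rfl⟩
      intro s hs hsa
      have : s = a := le_antisymm (by simpa using hsa) hs.2.1
      rw [this]
    | succ j ih =>
      obtain ⟨l, hP, hl, κ, hκ⟩ := ih
      set t := a + j * (δ / 2) with ht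
      have ht' : a + ((j + 1 : ℕ) : ℝ) * (δ / 2) = t + δ / 2 := by rw [ht]; push_cast; ring
      rw [ht']
      have hat : a ≤ t := by rw [ht]; have : 0 ≤ (j : ℝ) * (δ / 2) := by positivity
                             linarith
      by_cases hem : ∃ s0 ∈ K ∩ Icc a b, t ≤ s0 ∧ s0 ≤ t + δ / 2
      · obtain ⟨s0, hs0, h1, h2⟩ := hem
        have htI : t ∈ Icc a b := ⟨hat, h1.trans hs0.2.2⟩
        by_cases htK : t ∈ K
        · refine ⟨l, hP, ?_, κ, fun s hs => hκ s (by linarith)⟩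
          intro s hs hst
          rcases le_total s t with h | h
          · exact hl s hs h
          · rw [hκ s h, ← hκ t le_rfl, hl t ⟨htK, htI⟩ le_rfl]
            apply hd' t ⟨htK, htI⟩ s hs
            rw [abs_lt]; constructor <;> linarith
        · refine ⟨_, hstep l t (k s0 - κ) hP htI htK, ?_, k s0, ?_⟩
          · intro s hs hst
            by_cases h : s < t
            · simp [h, hl s hs h.le]
            · have h' := not_lt.1 h
              simp only [h, if_false, hκ s h']
              have : k s0 = k s := by
                apply hd' s0 hs0 s hs
                rw [abs_lt]; constructor <;> linarith
              omega
          · intro s hs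
            have : ¬ s < t := by linarith
            simp only [this, if_false, hκ s (not_lt.1 this)]
            omega
      · push Not at hem
        refine ⟨l, hP, ?_, κ, fun s hs => hκ s (by linarith)⟩
        intro s hs hst
        rcases le_total s t with h | h
        · exact hl s hs h
        · exact absurd (hem s hs h) (by linarith)
  obtain ⟨j, hj⟩ := exists_nat_gt ((b - a) / (δ / 2))
  obtain ⟨l, hP, hl, -⟩ := main j
  refine ⟨l, hP, fun s hs => hl s hs ?_⟩
  rw [div_lt_iff₀ (by positivity)] at hj
  linarith [hs.2.2]

lemma log_halfplane {s : ℝ} (hs : s ≠ 0) :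
    Complex.log (-(s * Complex.I)) + Real.pi * Complex.I - Complex.log (s * Complex.I) =
      if s < 0 then 2 * Real.pi * Complex.I else 0 := by
  rcases hs.lt_or_gt with h | h
  · have e1 : (s : ℂ) * Complex.I = ((-s : ℝ) : ℂ) * (-Complex.I) := by push_cast; ring
    have e2 : -((s : ℂ) * Complex.I) = ((-s : ℝ) : ℂ) * (Complex.I) := by push_cast; ring
    rw [e2, e1, Complex.log_ofReal_mul (by linarith) Complex.I_ne_zero,
      Complex.log_ofReal_mul (by linarith) (neg_ne_zero.2 Complex.I_ne_zero),
      Complex.log_I, Complex.log_neg_I, if_pos h]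
    ring
  · have e2 : -((s : ℂ) * Complex.I) = (s : ℂ) * (-Complex.I) := by ring
    rw [e2, Complex.log_ofReal_mul h Complex.I_ne_zero,
      Complex.log_ofReal_mul h (neg_ne_zero.2 Complex.I_ne_zero),
      Complex.log_I, Complex.log_neg_I, if_neg (by linarith)]
    ring

lemma mem_slit_of_re_nonneg {w : ℂ} (h : 0 ≤ w.re) (h0 : w ≠ 0) : w ∈ Complex.slitPlane := by
  rw [Complex.mem_slitPlane_iff]
  by_contra hc
  push Not at hc
  exact h0 (Complex.ext (le_antisymm hc.1 h) hc.2)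

lemma hasLog_merge {K A B : Set ℂ} {f : ℂ → ℂ} (hK : IsClosed K)
    (hKlog : ∀ c ∉ K, HasLog K (fun z => z - c))
    {ω : ℂ} (hω : ω ≠ 0) {x c d : ℝ} (hcd : c ≤ d) (hA : IsClosed A) (hB : IsClosed B)
    (hAK : A ⊆ K) (hBK : B ⊆ K)
    (hAr : ∀ z ∈ A, (ω * z).re ≤ x) (hBr : ∀ z ∈ B, x ≤ (ω * z).re)
    (h1 : ∀ t ∈ Icc c d, ∀ z ∈ K, ω * z = x + t * Complex.I → z ∈ A ∩ B)
    (h2 : ∀ z ∈ A ∩ B, (ω * z).im ∈ Icc c d)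
    (hfA : HasLog A f) (hfB : HasLog B f) : HasLog (A ∪ B) f := by
  obtain ⟨g₁, c₁, e₁⟩ := hfA
  obtain ⟨g₂, c₂, e₂⟩ := hfB
  obtain ⟨n, hn, hd⟩ := exists_int_diff (K := A ∩ B) (c₁.mono inter_subset_left)
    (c₂.mono inter_subset_right) (fun z hz => by rw [e₁ z hz.1, e₂ z hz.2])
  let ζ : ℝ → ℂ := fun t => (x + t * Complex.I) / ω
  have hζ : Continuous ζ := by fun_prop
  have hωζ : ∀ t, ω * ζ t = x + t * Complex.I := fun t => by simp only [ζ]; field_simp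
  let P : (ℝ → ℤ) → Prop := fun l => ∃ n₁ n₂ : ℂ → ℤ, ContinuousOn n₁ A ∧ ContinuousOn n₂ B ∧
    ∀ t ∈ Icc c d, ζ t ∈ K → n₁ (ζ t) - n₂ (ζ t) = l t
  obtain ⟨l, ⟨n₁, n₂, hn₁, hn₂, hl⟩, hl'⟩ := step_induction (K := ζ ⁻¹' K) (k := fun t => n (ζ t))
    hcd (hK.preimage hζ)
    (hn.comp hζ.continuousOn fun t ht => h1 t ht.2 _ ht.1 (hωζ t)) P
    (fun m => ⟨fun _ => m, fun _ => 0, continuousOn_const, continuousOn_const, by simp⟩) (by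
      rintro l s m ⟨n₁, n₂, hn₁, hn₂, hl⟩ hs hsK
      obtain ⟨L, hL, hLe⟩ := hKlog (ζ s) hsK
      have hne : ∀ z ∈ K, ω * z - (x + s * Complex.I) ≠ 0 := by
        intro z hz h0
        rw [← hωζ s, ← mul_sub] at h0
        rcases mul_eq_zero.1 h0 with h | h
        · exact hω h
        · exact hsK (by rw [sub_eq_zero.1 h] at hz; exact hz)
      have hL' : ∀ z ∈ K, Complex.exp (L z + Complex.log ω) = ω * z - (x + s * Complex.I) := by
        intro z hz
        rw [Complex.exp_add, hLe z hz, Complex.exp_log hω, ← hωζ s]; ring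
      obtain ⟨q₁, hq₁, hq₁'⟩ := exists_int_diff (K := A)
        (g₁ := fun z => Complex.log (-(ω * z - (x + s * Complex.I))) + Real.pi * Complex.I)
        (g₂ := fun z => L z + Complex.log ω) (by
          refine ContinuousOn.add (ContinuousOn.clog (by fun_prop) ?_) continuousOn_const
          intro z hz
          apply mem_slit_of_re_nonneg
          · have := hAr z hz
            simp at this ⊢; linarith
          · exact neg_ne_zero.2 (hne z (hAK hz)))
        ((hL.mono hAK).add continuousOn_const) (by
          intro z hz
          rw [hL' z (hAK hz), Complex.exp_add, Complex.exp_log (neg_ne_zero.2 (hne z (hAK hz))),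
            Complex.exp_pi_mul_I]; ring)
      obtain ⟨q₂, hq₂, hq₂'⟩ := exists_int_diff (K := B)
        (g₁ := fun z => Complex.log (ω * z - (x + s * Complex.I)))
        (g₂ := fun z => L z + Complex.log ω) (by
          refine ContinuousOn.clog (by fun_prop) ?_
          intro z hz
          apply mem_slit_of_re_nonneg
          · have := hBr z hz
            simp at this ⊢; linarith
          · exact (hne z (hBK hz)))
        ((hL.mono hBK).add continuousOn_const) (by
          intro z hz
          rw [hL' z (hBK hz), Complex.exp_log (hne z (hBK hz))])
      refine ⟨fun z => n₁ z + (m - m * q₁ z), fun z => n₂ z - m * q₂ z, ?_, ?_, ?_⟩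
      · exact hn₁.add (continuousOn_const.sub (continuousOn_const.mul hq₁))
      · exact hn₂.sub (continuousOn_const.mul hq₂)
      · intro t ht htK
        have hz := h1 t ht _ htK (hωζ t)
        have ea := hq₁' _ hz.1
        have eb := hq₂' _ hz.2
        have hts : t - s ≠ 0 := by
          intro h
          have : t = s := by linarith
          exact hsK (this ▸ htK)
        have ew : ω * ζ t - (x + s * Complex.I) = ((t - s : ℝ) : ℂ) * Complex.I := by
          rw [hωζ]; push_cast; ring
        simp only [ew] at ea eb
        have hh := log_halfplane hts
        rw [ea, eb] at hh
        have h3 : ((q₁ (ζ t) - q₂ (ζ t) : ℤ) : ℂ) * (2 * Real.pi * Complex.I) =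
          ((if t < s then 1 else 0 : ℤ) : ℂ) * (2 * Real.pi * Complex.I) := by
          push_cast
          by_cases h : t < s
          · rw [if_pos (by linarith)] at hh
            simp only [h, if_true]
            linear_combination hh
          · rw [if_neg (by linarith)] at hh
            simp only [h, if_false]
            linear_combination hh
        have h4 : q₁ (ζ t) - q₂ (ζ t) = (if t < s then 1 else 0 : ℤ) := by
          exact_mod_cast mul_right_cancel₀ two_pi_I_ne h3
        have h5 := hl t ht htK
        have h6 : (if t < s then 0 else m) = m - m * (if t < s then 1 else 0 : ℤ) := by
          split_ifs <;> simp
        simp only [h6, ← h4, ← h5]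
        ring)
  obtain ⟨g, hg, ea, eb⟩ := exists_glue hA hB
    (g₁ := fun z => g₁ z - n₁ z * (2 * Real.pi * Complex.I))
    (g₂ := fun z => g₂ z - n₂ z * (2 * Real.pi * Complex.I))
    (c₁.sub (((continuous_of_discreteTopology (f := fun m : ℤ => (m : ℂ))).comp_continuousOn
      hn₁).mul continuousOn_const))
    (c₂.sub (((continuous_of_discreteTopology (f := fun m : ℤ => (m : ℂ))).comp_continuousOn
      hn₂).mul continuousOn_const)) (by
      intro z hz
      have hzt : ζ (ω * z).im = z := by
        have hre : (ω * z).re = x := le_antisymm (hAr z hz.1) (hBr z hz.2)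
        have : (x : ℂ) + (ω * z).im * Complex.I = ω * z := by
          rw [← hre]; exact Complex.re_add_im _
        simp only [ζ, this]; field_simp
      have hI := h2 z hz
      have k1 := hl _ hI (by rw [hzt]; exact hAK hz.1)
      have k2 := hl' _ ⟨by rw [mem_preimage, hzt]; exact hAK hz.1, hI⟩
      simp only [hzt] at k1 k2
      have k3 : n z = n₁ z - n₂ z := by rw [k1, k2]
      have := hd z hz
      rw [k3] at this
      push_cast at this
      linear_combination this)
  refine ⟨g, hg, ?_⟩
  have hexp : ∀ (u : ℂ) (m : ℤ), Complex.exp (u - m * (2 * Real.pi * Complex.I)) = Complex.exp u :=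
    fun u m => by rw [Complex.exp_sub, Complex.exp_int_mul_two_pi_mul_I, div_one]
  rintro z (hz | hz)
  · rw [ea z hz, hexp, e₁ z hz]
  · rw [eb z hz, hexp, e₂ z hz]

/-- If the complement of the compact set `K` has no bounded component (expressed through
logarithms), then every nonvanishing function on `K` has a logarithm. -/
lemma hasLog_of_forall {K : Set ℂ} {f : ℂ → ℂ} (hK : IsCompact K)
    (hKlog : ∀ c ∉ K, HasLog K (fun z => z - c)) (hf : ContinuousOn f K)
    (h0 : ∀ z ∈ K, f z ≠ 0) : HasLog K f := by
  rcases K.eq_empty_or_nonempty with rfl | hne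
  · exact ⟨fun _ => 0, continuousOn_const, by simp⟩
  obtain ⟨w, hw, hmin⟩ := hK.exists_isMinOn hne hf.norm
  have hm : 0 < ‖f w‖ := norm_pos_iff.2 (h0 w hw)
  obtain ⟨δ, hδ, hd⟩ := Metric.uniformContinuousOn_iff.1
    (hK.uniformContinuousOn_of_continuous hf) _ hm
  have small : ∀ S ⊆ K, (∀ z ∈ S, ∀ z' ∈ S, dist z z' < δ) → HasLog S f := by
    intro S hS hSd
    rcases S.eq_empty_or_nonempty with rfl | ⟨z₀, hz₀⟩
    · exact ⟨fun _ => 0, continuousOn_const, by simp⟩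
    have hz0 := h0 z₀ (hS hz₀)
    have : HasLog S (fun z => f z / f z₀) := by
      refine hasLog_of_slit ((hf.mono hS).div_const _) fun z hz => div_mem_slitPlane hz0 ?_
      rw [← dist_eq_norm]
      exact lt_of_lt_of_le (hd z (hS hz) z₀ (hS hz₀) (hSd z hz z₀ hz₀)) (hmin (hS hz₀))
    exact (this.mul (hasLog_const S hz0)).congr fun z _ => by field_simp
  let r : ℝ → ℝ → ℝ → ℝ → Set ℂ := fun a b c d => K ∩ {z | z.re ∈ Icc a b ∧ z.im ∈ Icc c d}
  have rcl : ∀ a b c d, IsClosed (r a b c d) := fun a b c d =>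
    hK.isClosed.inter ((isClosed_Icc.preimage Complex.continuous_re).inter
      (isClosed_Icc.preimage Complex.continuous_im))
  obtain ⟨R, hR⟩ := hK.isBounded.exists_norm_le
  set h := δ / 3 with hh
  have hpos : 0 < h := by positivity
  have cell : ∀ a b c d, b - a ≤ h → d - c ≤ h → HasLog (r a b c d) f := by
    intro a b c d hab hcd
    refine small _ inter_subset_left ?_
    rintro z ⟨-, ⟨z1, z2⟩, z3, z4⟩ z' ⟨-, ⟨w1, w2⟩, w3, w4⟩
    rw [dist_eq_norm]
    refine lt_of_le_of_lt (Complex.norm_le_abs_re_add_abs_im _) ?_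
    have : |(z - z').re| ≤ h := by rw [Complex.sub_re, abs_le]; constructor <;> linarith
    have : |(z - z').im| ≤ h := by rw [Complex.sub_im, abs_le]; constructor <;> linarith
    linarith
  have col : ∀ a b c, a ≤ b → b - a ≤ h → ∀ j : ℕ, HasLog (r a b c (c + j * h)) f := by
    intro a b c hab hab' j
    induction j with
    | zero => exact cell _ _ _ _ hab' (by simp [hpos.le])
    | succ j ih =>
      set y := c + j * h with hy
      have hcy : c ≤ y := by
        have : 0 ≤ (j : ℝ) * h := by positivity
        linarith
      have e : c + ((j + 1 : ℕ) : ℝ) * h = y + h := by rw [hy]; push_cast; ring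
      rw [e]
      have hm := hasLog_merge (A := r a b c y) (B := r a b y (y + h)) (ω := -Complex.I) (x := y)
        (c := -b) (d := -a) (f := f) hK.isClosed hKlog (by simp) (by linarith) (rcl _ _ _ _)
        (rcl _ _ _ _) inter_subset_left inter_subset_left
        (fun z hz => by simpa using hz.2.2.2) (fun z hz => by simpa using hz.2.2.1)
        (by
          intro t ht z hz hzt
          have hre := congrArg Complex.re hzt
          have him := congrArg Complex.im hzt
          simp at hre him
          have : z.re ∈ Icc a b := ⟨by linarith [ht.2], by linarith [ht.1]⟩
          exact ⟨⟨hz, this, by rw [hre]; exact ⟨hcy, le_rfl⟩⟩,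
            ⟨hz, this, by rw [hre]; exact ⟨le_rfl, by linarith⟩⟩⟩)
        (by
          intro z hz
          have := hz.1.2.1
          simp only [mem_Icc] at this
          simp [this.1, this.2])
        ih (cell _ _ _ _ hab' (by linarith))
      refine hm.mono ?_
      rintro z ⟨hz, h1, h2, h3⟩
      rcases le_total z.im y with h | h
      · exact Or.inl ⟨hz, h1, h2, h⟩
      · exact Or.inr ⟨hz, h1, h, h3⟩
  have row : ∀ a c, ∀ j i : ℕ, HasLog (r a (a + i * h) c (c + j * h)) f := by
    intro a c j i
    induction i with
    | zero => exact col _ _ _ (by simp) (by simp [hpos.le]) j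
    | succ i ih =>
      set x := a + i * h with hx
      have hax : a ≤ x := by
        have : 0 ≤ (i : ℝ) * h := by positivity
        linarith
      have hcj : c ≤ c + j * h := by
        have : 0 ≤ (j : ℝ) * h := by positivity
        linarith
      have e : a + ((i + 1 : ℕ) : ℝ) * h = x + h := by rw [hx]; push_cast; ring
      rw [e]
      have hm := hasLog_merge (A := r a x c (c + j * h)) (B := r x (x + h) c (c + j * h))
        (ω := 1) (x := x)
        (c := c) (d := c + j * h) (f := f) hK.isClosed hKlog (by simp) hcj (rcl _ _ _ _)
        (rcl _ _ _ _) inter_subset_left inter_subset_left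
        (fun z hz => by simpa using hz.2.1.2) (fun z hz => by simpa using hz.2.1.1)
        (by
          intro t ht z hz hzt
          have hre := congrArg Complex.re hzt
          have him := congrArg Complex.im hzt
          simp at hre him
          have : z.im ∈ Icc c (c + j * h) := by rw [him]; exact ht
          exact ⟨⟨hz, by rw [hre]; exact ⟨hax, le_rfl⟩, this⟩,
            ⟨hz, by rw [hre]; exact ⟨le_rfl, by linarith⟩, this⟩⟩)
        (by
          intro z hz
          rw [one_mul]
          exact hz.1.2.2)
        ih (col _ _ _ (by linarith) (by linarith) j)
      refine hm.mono ?_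
      rintro z ⟨hz, ⟨h2, h3⟩, h1⟩
      rcases le_total z.re x with h | h
      · exact Or.inl ⟨hz, ⟨h2, h⟩, h1⟩
      · exact Or.inr ⟨hz, ⟨h, h3⟩, h1⟩
  obtain ⟨N, hN⟩ := exists_nat_gt ((2 * R) / h)
  rw [div_lt_iff₀ hpos] at hN
  refine (row (-R) (-R) N N).mono fun z hz => ⟨hz, ?_⟩
  have h1 := (Complex.abs_re_le_norm z).trans (hR z hz)
  have h2 := (Complex.abs_im_le_norm z).trans (hR z hz)
  rw [abs_le] at h1 h2
  refine ⟨⟨by linarith, by linarith⟩, ⟨by linarith, by linarith⟩⟩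

lemma frontier_component_subset {X : Type*} [TopologicalSpace X] [LocallyConnectedSpace X]
    {K : Set X} (hK : IsClosed K) (a : X) : frontier (connectedComponentIn Kᶜ a) ⊆ K := by
  intro z hz
  by_contra hzK
  have ho : IsOpen (connectedComponentIn Kᶜ a) := hK.isOpen_compl.connectedComponentIn
  have ho' : IsOpen (connectedComponentIn Kᶜ z) := hK.isOpen_compl.connectedComponentIn
  rw [ho.frontier_eq] at hz
  obtain ⟨u, hu, hu'⟩ := mem_closure_iff.1 hz.1 _ ho' (mem_connectedComponentIn hzK)
  have e : connectedComponentIn Kᶜ a = connectedComponentIn Kᶜ z :=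
    (connectedComponentIn_eq hu').trans (connectedComponentIn_eq hu).symm
  exact hz.2 (e ▸ mem_connectedComponentIn hzK)

/-- Eilenberg's criterion, one direction. -/
lemma unbounded_of_hasLog {K : Set ℂ} (hK : IsCompact K) {a : ℂ} (ha : a ∉ K)
    (hlog : HasLog K (fun z => z - a)) :
    ¬ Bornology.IsBounded (connectedComponentIn Kᶜ a) := by
  intro hb
  obtain ⟨g, hg, he⟩ := hlog
  obtain ⟨G, hG⟩ := ContinuousMap.exists_restrict_eq hK.isClosed
    (⟨K.restrict g, hg.restrict⟩ : C(K, ℂ))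
  have hG' : ∀ z ∈ K, G z = g z := fun z hz => congrArg (fun F => F ⟨z, hz⟩) hG
  set W := connectedComponentIn Kᶜ a with hW
  have haW : a ∈ W := mem_connectedComponentIn ha
  classical
  let Φ : ℂ → ℂ := W.piecewise (fun z => Complex.exp (G z)) (fun z => z - a)
  have hΦ : Continuous Φ := by
    apply Continuous.piecewise
    · intro z hz
      have hzK := frontier_component_subset hK.isClosed a hz
      rw [hG' z hzK, he z hzK]
    · exact Complex.continuous_exp.comp G.continuous
    · fun_prop
  have hΦ0 : ∀ z, Φ z ≠ 0 := by
    intro z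
    by_cases hz : z ∈ W
    · simp only [Φ, piecewise_eq_of_mem _ _ _ hz]; exact Complex.exp_ne_zero _
    · simp only [Φ, piecewise_eq_of_notMem _ _ _ hz]
      intro h
      rw [sub_eq_zero] at h
      exact hz (h ▸ haW)
  obtain ⟨R, hR⟩ := hb.exists_norm_le
  set S := |R| + ‖a‖ + 1 with hS
  have hSpos : 0 < S := by positivity
  have hlog' : HasLog (Metric.closedBall (0 : ℂ) S) (fun z => Φ (z + a)) := by
    apply hasLog_star (isCompact_closedBall _ _)
    · intro z hz t ht0 ht1
      rw [mem_closedBall_zero_iff] at hz ⊢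
      rw [norm_smul, Real.norm_eq_abs, abs_of_nonneg ht0]
      nlinarith [norm_nonneg z]
    · exact (hΦ.comp (by fun_prop)).continuousOn
    · exact fun z _ => hΦ0 _
  refine not_hasLog_sphere hSpos ((hlog'.mono Metric.sphere_subset_closedBall).congr ?_)
  intro z hz
  have hz' : ‖z‖ = S := by simpa using hz
  have hn : z + a ∉ W := by
    intro h
    have h1 := hR _ h
    have h2 : ‖z‖ ≤ ‖z + a‖ + ‖a‖ := by simpa using norm_sub_le (z + a) a
    have := le_abs_self R
    linarith
  simp [Φ, piecewise_eq_of_notMem _ _ _ hn]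

/-- A homeomorphism of the complement of `b` with the plane. -/
structure PlaneChart (S : Type*) [TopologicalSpace S] (b : S) where
  φ : S → ℂ
  ψ : ℂ → S
  cφ : ContinuousOn φ {b}ᶜ
  cψ : Continuous ψ
  φψ : ∀ z, φ (ψ z) = z
  ψφ : ∀ s, s ≠ b → ψ (φ s) = s
  ψb : ∀ z, ψ z ≠ b

/-- `a` is in the component of `b` in the complement of `K`. -/
def Out {S : Type*} [TopologicalSpace S] (b : S) (K : Set S) (a : S) : Prop :=
  a ∈ connectedComponentIn Kᶜ b

/-- `K` does not separate anything from `b`. -/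
def NonSep {S : Type*} [TopologicalSpace S] (b : S) (K : Set S) : Prop :=
  ∀ a ∉ K, Out b K a

section Sph
variable {S : Type*} [TopologicalSpace S]

lemma Out.notMem {b a : S} {K : Set S} (h : Out b K a) : a ∉ K :=
  connectedComponentIn_subset _ _ h

lemma Out.mono {b a : S} {K A : Set S} (h : Out b K a) (hA : A ⊆ K) : Out b A a :=
  connectedComponentIn_mono b (compl_subset_compl.2 hA) h

lemma Out.trans {b a a' : S} {K Y : Set S} (h : Out b K a) (hY : IsPreconnected Y)
    (ha : a ∈ Y) (ha' : a' ∈ Y) (hYK : ∀ z ∈ Y, z ∉ K) : Out b K a' := by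
  have h1 := hY.subset_connectedComponentIn (F := Kᶜ) ha hYK
  unfold Out at h ⊢
  rw [connectedComponentIn_eq h]
  exact h1 ha'

lemma out_self {b : S} {K : Set S} (h : b ∉ K) : Out b K b := mem_connectedComponentIn h

variable [CompactSpace S] [T2Space S] [LocallyConnectedSpace S] {b : S}

lemma PlaneChart.compact_image (c : PlaneChart S b) {K : Set S} (hK : IsClosed K) (hb : b ∉ K) :
    IsCompact (c.φ '' K) :=
  hK.isCompact.image_of_continuousOn (c.cφ.mono fun z hz h => hb (h ▸ hz))

lemma PlaneChart.hasLog_iff (c : PlaneChart S b) {K : Set S} (hb : b ∉ K) (f : ℂ → ℂ) :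
    HasLog K (fun z => f (c.φ z)) ↔ HasLog (c.φ '' K) f := by
  constructor
  · intro h
    have := h.comp (φ := c.ψ) (K' := c.φ '' K) c.cψ.continuousOn (by
      rintro _ ⟨z, hz, rfl⟩
      rw [c.ψφ z (fun h => hb (h ▸ hz))]
      exact hz)
    exact this.congr fun z _ => by simp [c.φψ]
  · intro h
    exact h.comp (c.cφ.mono fun z hz h => hb (h ▸ hz)) (mapsTo_image _ _)

lemma out_of_hasLog (c : PlaneChart S b) {K : Set S} (hK : IsClosed K) (hb : b ∉ K) {a : S}
    (ha : a ∉ K) (hab : a ≠ b) (h : HasLog K (fun z => c.φ z - c.φ a)) : Out b K a := by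
  have hcomp := c.compact_image hK hb
  have ha' : c.φ a ∉ c.φ '' K := by
    rintro ⟨z, hz, hza⟩
    have := congrArg c.ψ hza
    rw [c.ψφ z (fun h => hb (h ▸ hz)), c.ψφ a hab] at this
    exact ha (this ▸ hz)
  have hunb := unbounded_of_hasLog hcomp ha' ((c.hasLog_iff hb (fun z => z - c.φ a)).1 h)
  set W := connectedComponentIn (c.φ '' K)ᶜ (c.φ a) with hW
  have hpre : IsPreconnected (c.ψ '' W) :=
    isPreconnected_connectedComponentIn.image _ c.cψ.continuousOn
  have hbcl : b ∈ closure (c.ψ '' W) := by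
    by_contra hcl
    apply hunb
    obtain ⟨V, hV, hVo, hbV⟩ : ∃ V, V ⊆ (c.ψ '' W)ᶜ ∧ IsOpen V ∧ b ∈ V :=
      ⟨(closure (c.ψ '' W))ᶜ, compl_subset_compl.2 subset_closure, isClosed_closure.isOpen_compl, hcl⟩
    have := (c.compact_image hVo.isClosed_compl (by simpa using hbV)).isBounded
    refine this.subset fun w hw => ⟨c.ψ w, ?_, c.φψ w⟩
    intro hwV
    exact hV hwV ⟨w, hw, rfl⟩
  have hpre' : IsPreconnected (insert b (c.ψ '' W)) :=
    hpre.subset_closure (subset_insert _ _) (insert_subset hbcl subset_closure)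
  refine (out_self hb).trans hpre' (mem_insert _ _)
    (mem_insert_of_mem _ ⟨c.φ a, mem_connectedComponentIn ha', c.ψφ a hab⟩) ?_
  rintro z (rfl | ⟨w, hw, rfl⟩)
  · exact hb
  · intro hz
    exact connectedComponentIn_subset _ _ hw ⟨_, hz, c.φψ w⟩

lemma hasLog_of_out (c : PlaneChart S b) {K : Set S} (hK : IsClosed K) (hb : b ∉ K) {a : S}
    (hab : a ≠ b) (h : Out b K a) : HasLog K (fun z => c.φ z - c.φ a) := by
  have hcomp := c.compact_image hK hb
  have hcφ : ContinuousOn c.φ K := c.cφ.mono fun z hz h => hb (h ▸ hz)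
  let P : S → Prop := fun x => x = b ∨ HasLog K (fun z => c.φ z - c.φ x)
  have key := isPreconnected_connectedComponentIn (x := b) (F := Kᶜ) |>.induction₂'
    (fun x y => P x → P y) (by
      intro x hx
      have hxK : x ∉ K := connectedComponentIn_subset _ _ hx
      apply nhdsWithin_le_nhds
      by_cases hxb : x = b
      · subst hxb
        obtain ⟨R, hR⟩ := hcomp.isBounded.exists_norm_le
        have hcl : IsClosed (c.ψ '' Metric.closedBall 0 (max R 0)) :=
          ((isCompact_closedBall _ _).image c.cψ).isClosed
        have hn : x ∉ c.ψ '' Metric.closedBall 0 (max R 0) := by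
          rintro ⟨z, -, hz⟩
          exact c.ψb z hz
        filter_upwards [hcl.isOpen_compl.mem_nhds hn] with y hy
        refine ⟨fun _ => ?_, fun _ => Or.inl rfl⟩
        by_cases hyx : y = x
        · exact Or.inl hyx
        right
        have hyn : max R 0 < ‖c.φ y‖ := by
          by_contra hc
          exact hy ⟨c.φ y, by rw [mem_closedBall_zero_iff]; exact not_lt.1 hc, c.ψφ y hyx⟩
        have hy0 : c.φ y ≠ 0 := norm_pos_iff.1 (lt_of_le_of_lt (le_max_right _ _) hyn)
        have h1 : HasLog K (fun z => (c.φ z - c.φ y) / (- c.φ y)) := by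
          refine hasLog_of_slit ((hcφ.sub continuousOn_const).div_const _) fun z hz => ?_
          apply div_mem_slitPlane (neg_ne_zero.2 hy0)
          have := hR _ ⟨z, hz, rfl⟩
          rw [norm_neg]
          have e : c.φ z - c.φ y - -c.φ y = c.φ z := by ring
          rw [e]
          exact lt_of_le_of_lt (this.trans (le_max_left _ _)) hyn
        exact (h1.mul (hasLog_const K (neg_ne_zero.2 hy0))).congr fun z _ => by field_simp
      · have hx' : c.φ x ∉ c.φ '' K := by
          rintro ⟨z, hz, hza⟩
          have := congrArg c.ψ hza
          rw [c.ψφ z (fun h => hb (h ▸ hz)), c.ψφ x hxb] at this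
          exact hxK (this ▸ hz)
        obtain ⟨ε, hε, hball⟩ := Metric.isOpen_iff.1 hcomp.isClosed.isOpen_compl _ hx'
        have hdist : ∀ z ∈ K, ε ≤ ‖c.φ z - c.φ x‖ := by
          intro z hz
          by_contra hc
          push Not at hc
          exact hball (by rw [Metric.mem_ball, dist_eq_norm]; exact hc) ⟨z, hz, rfl⟩
        have hcx : ContinuousAt c.φ x := c.cφ.continuousAt (isOpen_compl_singleton.mem_nhds hxb)
        filter_upwards [hcx (Metric.ball_mem_nhds _ hε), isOpen_compl_singleton.mem_nhds hxb]
          with y hy hyb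
        have hy : ‖c.φ x - c.φ y‖ < ε := by
          rw [mem_preimage, Metric.mem_ball', dist_eq_norm] at hy; exact hy
        have hne : ∀ z ∈ K, c.φ z - c.φ x ≠ 0 := fun z hz =>
          norm_pos_iff.1 (hε.trans_le (hdist z hz))
        have hq : HasLog K (fun z => (c.φ z - c.φ y) / (c.φ z - c.φ x)) := by
          refine hasLog_of_slit ((hcφ.sub continuousOn_const).div
            (hcφ.sub continuousOn_const) hne) fun z hz => ?_
          apply div_mem_slitPlane (hne z hz)
          have e : c.φ z - c.φ y - (c.φ z - c.φ x) = c.φ x - c.φ y := by ring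
          rw [e]
          exact hy.trans_le (hdist z hz)
        have hqinv : HasLog K (fun z => (c.φ z - c.φ x) / (c.φ z - c.φ y)) := by
          obtain ⟨g, hg, he⟩ := hq
          exact ⟨fun z => - g z, hg.neg, fun z hz => by
            rw [Complex.exp_neg, he z hz, inv_div]⟩
        have hne' : ∀ z ∈ K, c.φ z - c.φ y ≠ 0 := by
          intro z hz h0
          have := hdist z hz
          have e : c.φ z - c.φ x = - (c.φ x - c.φ y) := by linear_combination h0
          rw [e, norm_neg] at this
          linarith
        constructor
        · rintro (h | h)
          · exact absurd h hxb
          · exact Or.inr ((h.mul hq).congr fun z hz => by have := hne z hz; field_simp)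
        · rintro (h | h)
          · exact absurd h hyb
          · exact Or.inr ((h.mul hqinv).congr fun z hz => by have := hne' z hz; field_simp))
    (fun x y z _ _ _ h1 h2 h => h2 (h1 h)) (mem_connectedComponentIn hb) h
  rcases key (Or.inl rfl) with hk | hk
  · exact absurd hk hab
  · exact hk

/-- The theorem of Janiszewski. -/
lemma janiszewski (c : PlaneChart S b) {K₁ K₂ : Set S} (h₁ : IsClosed K₁) (h₂ : IsClosed K₂)
    (hb₁ : b ∉ K₁) (hb₂ : b ∉ K₂) (hc : IsPreconnected (K₁ ∩ K₂)) {a : S}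
    (ho₁ : Out b K₁ a) (ho₂ : Out b K₂ a) : Out b (K₁ ∪ K₂) a := by
  have hbu : b ∉ K₁ ∪ K₂ := by simp [hb₁, hb₂]
  by_cases hab : a = b
  · subst hab; exact out_self hbu
  exact out_of_hasLog c (h₁.union h₂) hbu (by simp [ho₁.notMem, ho₂.notMem]) hab
    (HasLog.glue h₁ h₂ (hasLog_of_out c h₁ hb₁ hab ho₁) (hasLog_of_out c h₂ hb₂ hab ho₂) hc)

lemma NonSep.union (c : PlaneChart S b) {K₁ K₂ : Set S} (h₁ : IsClosed K₁) (h₂ : IsClosed K₂)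
    (hb₁ : b ∉ K₁) (hb₂ : b ∉ K₂) (hc : IsPreconnected (K₁ ∩ K₂))
    (ho₁ : NonSep b K₁) (ho₂ : NonSep b K₂) : NonSep b (K₁ ∪ K₂) := fun a ha =>
  janiszewski c h₁ h₂ hb₁ hb₂ hc (ho₁ a fun h => ha (Or.inl h)) (ho₂ a fun h => ha (Or.inr h))

lemma arc_isClosed {f : ℝ → S} {u v : ℝ} (hf : ContinuousOn f (Icc u v)) :
    IsClosed (f '' Icc u v) := (isCompact_Icc.image_of_continuousOn hf).isClosed

lemma nonSep_arc (c : PlaneChart S b) {f : ℝ → S} {u v : ℝ} (hf : ContinuousOn f (Icc u v))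
    (hinj : InjOn f (Icc u v)) (hb : b ∉ f '' Icc u v) : NonSep b (f '' Icc u v) := by
  intro a ha
  by_cases hab : a = b
  · subst hab; exact out_self hb
  refine out_of_hasLog c (arc_isClosed hf) hb ha hab ?_
  have hinv : ContinuousOn (Function.invFunOn f (Icc u v)) (f '' Icc u v) := by
    rw [continuousOn_iff_isClosed]
    intro t ht
    refine ⟨f '' (Icc u v ∩ t), ((isCompact_Icc.inter_right ht).image_of_continuousOn
      (hf.mono inter_subset_left)).isClosed, ?_⟩
    ext z
    constructor
    · rintro ⟨hz, w, hw, rfl⟩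
      rw [mem_preimage, hinj.leftInvOn_invFunOn hw] at hz
      exact ⟨⟨w, ⟨hw, hz⟩, rfl⟩, ⟨w, hw, rfl⟩⟩
    · rintro ⟨⟨w, ⟨hw, hwt⟩, rfl⟩, hz⟩
      refine ⟨?_, hz⟩
      rw [mem_preimage, hinj.leftInvOn_invFunOn hw]
      exact hwt
  have hcφ : ContinuousOn c.φ (f '' Icc u v) := c.cφ.mono fun z hz h => hb (h ▸ hz)
  have hmem : ∀ t ∈ Icc 0 (v - u), u + t ∈ Icc u v := fun t ht =>
    ⟨by linarith [ht.1], by linarith [ht.2]⟩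
  have h1 : HasLog (Icc (0 : ℝ) (v - u)) (fun t => c.φ (f (u + t)) - c.φ a) := by
    apply hasLog_star isCompact_Icc
    · intro z hz t h0 h1
      exact ⟨mul_nonneg h0 hz.1, by
        rw [smul_eq_mul]; nlinarith [hz.1, hz.2]⟩
    · refine ContinuousOn.sub ?_ continuousOn_const
      exact hcφ.comp (hf.comp (by fun_prop) hmem) fun t ht => ⟨_, hmem t ht, rfl⟩
    · intro t ht h0
      have := congrArg c.ψ (sub_eq_zero.1 h0)
      rw [c.ψφ _ (fun h => hb ⟨_, hmem t ht, h⟩), c.ψφ a hab] at this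
      exact ha ⟨_, hmem t ht, this⟩
  have h2 := h1.comp (K' := f '' Icc u v) (φ := fun z => Function.invFunOn f (Icc u v) z - u)
    (hinv.sub continuousOn_const) (by
      rintro _ ⟨w, hw, rfl⟩
      simp only [hinj.leftInvOn_invFunOn hw]
      exact ⟨by linarith [hw.1], by linarith [hw.2]⟩)
  refine h2.congr ?_
  rintro _ ⟨w, hw, rfl⟩
  simp only [Function.comp, hinj.leftInvOn_invFunOn hw]
  rw [add_sub_cancel]

/-- Separation half of the Jordan curve theorem. -/
lemma exists_not_out (c : PlaneChart S b) {K₁ K₂ : Set S} (h₁ : IsClosed K₁) (h₂ : IsClosed K₂)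
    (hb₁ : b ∉ K₁) (hb₂ : b ∉ K₂) (p₁ : IsPreconnected K₁) (p₂ : IsPreconnected K₂)
    {e₀ e₁ : S} (hne : e₀ ≠ e₁) (hInter : K₁ ∩ K₂ = {e₀, e₁}) :
    ∃ a, a ∉ K₁ ∪ K₂ ∧ ¬ Out b (K₁ ∪ K₂) a := by
  by_contra hcon
  push Not at hcon
  have hbu : b ∉ K₁ ∪ K₂ := by simp [hb₁, hb₂]
  have hK := h₁.union h₂
  obtain ⟨h, h0, h1, -⟩ := exists_continuous_zero_one_of_isClosed
    (isClosed_singleton (x := e₀)) (isClosed_singleton (x := e₁)) (by simpa using hne)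
  have h0 : h e₀ = 0 := h0 rfl
  have h1 : h e₁ = 1 := h1 rfl
  have hc : Continuous (fun z => (h z : ℂ)) := Complex.continuous_ofReal.comp h.continuous
  obtain ⟨F, hF, ha, hb⟩ := exists_glue h₁ h₂
    (g₁ := fun z => Complex.exp (h z * (Real.pi * Complex.I)))
    (g₂ := fun z => Complex.exp (- (h z * (Real.pi * Complex.I))))
    (Complex.continuous_exp.comp (hc.mul continuous_const)).continuousOn
    (Complex.continuous_exp.comp (hc.mul continuous_const).neg).continuousOn (by
      intro z hz
      rw [hInter] at hz
      rcases hz with rfl | rfl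
      · simp [h0]
      · simp [h1, Complex.exp_neg, Complex.exp_pi_mul_I])
  have hlog : HasLog (K₁ ∪ K₂) F := by
    have hh : HasLog (c.φ '' (K₁ ∪ K₂)) (fun z => F (c.ψ z)) := by
      apply hasLog_of_forall (c.compact_image hK hbu)
      · intro w hw
        rw [← c.hasLog_iff hbu]
        have hwK : c.ψ w ∉ K₁ ∪ K₂ := fun h => hw ⟨_, h, c.φψ w⟩
        have := hasLog_of_out c hK hbu (c.ψb w) (hcon _ hwK)
        rwa [c.φψ] at this
      · refine hF.comp c.cψ.continuousOn ?_
        rintro _ ⟨z, hz, rfl⟩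
        rw [c.ψφ z (fun h => hbu (h ▸ hz))]
        exact hz
      · rintro _ ⟨z, hz, rfl⟩
        simp only [c.ψφ z (fun h => hbu (h ▸ hz))]
        rcases hz with hz | hz
        · rw [ha z hz]; exact Complex.exp_ne_zero _
        · rw [hb z hz]; exact Complex.exp_ne_zero _
    refine ((c.hasLog_iff hbu _).2 hh).congr fun z hz => ?_
    rw [c.ψφ z (fun h => hbu (h ▸ hz))]
  obtain ⟨g, hg, he⟩ := hlog
  obtain ⟨n₁, c₁, d₁⟩ := exists_int_diff (K := K₁) (g₂ := fun z => h z * (Real.pi * Complex.I))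
    (hg.mono subset_union_left) (hc.mul continuous_const).continuousOn
    (fun z hz => by rw [he z (Or.inl hz), ha z hz])
  obtain ⟨n₂, c₂, d₂⟩ := exists_int_diff (K := K₂) (g₂ := fun z => -(h z * (Real.pi * Complex.I)))
    (hg.mono subset_union_right) (hc.mul continuous_const).neg.continuousOn
    (fun z hz => by rw [he z (Or.inr hz), hb z hz])
  have m0 : e₀ ∈ K₁ ∩ K₂ := by simp [hInter]
  have m1 : e₁ ∈ K₁ ∩ K₂ := by simp [hInter]
  have q1 := p₁.constant c₁ m0.1 m1.1
  have q2 := p₂.constant c₂ m0.2 m1.2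
  have r1 := d₁ _ m0.1
  have r2 := d₂ _ m0.2
  have r3 := d₁ _ m1.1
  have r4 := d₂ _ m1.2
  rw [← q1] at r3
  rw [← q2] at r4
  simp only [h0, h1] at r1 r2 r3 r4
  push_cast at r1 r2 r3 r4
  have : (2 * Real.pi * Complex.I : ℂ) = 0 := by
    linear_combination r1 - r2 - r3 + r4
  exact two_pi_I_ne this

/-- A simple closed curve `f [0,1] ∪ β`, where `β` is an arc-like set. -/
structure Loop (b : S) (f : ℝ → S) (β : Set S) : Prop where
  cont : ContinuousOn f (Icc 0 1)
  inj : InjOn f (Icc 0 1)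
  closed : IsClosed β
  preconn : IsPreconnected β
  nonsep : NonSep b β
  inter : f '' Icc 0 1 ∩ β = {f 0, f 1}
  hbα : b ∉ f '' Icc 0 1
  hbβ : b ∉ β

lemma preconn_inter_frontier {X : Type*} [TopologicalSpace X] {t u : Set X}
    (ht : IsPreconnected t) (h1 : (t ∩ u).Nonempty) (h2 : (t ∩ uᶜ).Nonempty) :
    (t ∩ frontier u).Nonempty := by
  by_contra hne
  rw [not_nonempty_iff_eq_empty] at hne
  have hn : ∀ z ∈ t, z ∉ frontier u := fun z hz hf => by
    have : z ∈ t ∩ frontier u := ⟨hz, hf⟩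
    rw [hne] at this
    exact this
  obtain ⟨a, ha, hau⟩ := h1
  obtain ⟨b, hb, hbu⟩ := h2
  obtain ⟨z, -, hz1, hz2⟩ := ht (interior u) (closure u)ᶜ isOpen_interior
    isClosed_closure.isOpen_compl (fun z hz => by
      by_cases h : z ∈ interior u
      · exact Or.inl h
      · exact Or.inr fun hc => hn z hz ⟨hc, h⟩)
    ⟨a, ha, by_contra fun h => hn a ha ⟨subset_closure hau, h⟩⟩
    ⟨b, hb, fun hc => hn b hb ⟨hc, fun h => hbu (interior_subset h)⟩⟩
  exact hz2 (subset_closure (interior_subset hz1))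


lemma Loop.mem_closure (c : PlaneChart S b) {f : ℝ → S} {β : Set S} (L : Loop b f β) {a a₀ : S}
    (ha : a ∉ f '' Icc 0 1 ∪ β) (ha₀ : a₀ ∉ f '' Icc 0 1 ∪ β)
    (hsep : a₀ ∉ connectedComponentIn (f '' Icc 0 1 ∪ β)ᶜ a) {s : ℝ} (hs : s ∈ Icc (0 : ℝ) 1) :
    f s ∈ closure (connectedComponentIn (f '' Icc 0 1 ∪ β)ᶜ a) := by
  set U := connectedComponentIn (f '' Icc 0 1 ∪ β)ᶜ a with hU
  have hT : IsClosed (f '' Icc 0 1 ∪ β) := (arc_isClosed L.cont).union L.closed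
  have main : ∀ s ∈ Ioo (0 : ℝ) 1, f s ∈ closure U := by
    intro s hs
    by_contra hcl
    have hcs : ContinuousAt f s := L.cont.continuousAt (Icc_mem_nhds hs.1 hs.2)
    have hnb : f ⁻¹' (closure U)ᶜ ∩ Ioo 0 1 ∈ 𝓝 s :=
      Filter.inter_mem (hcs (isClosed_closure.isOpen_compl.mem_nhds hcl)) (Ioo_mem_nhds hs.1 hs.2)
    obtain ⟨ε, hε, hball⟩ := Metric.mem_nhds_iff.1 hnb
    set s₁ := s - ε / 2 with hs₁
    set s₂ := s + ε / 2 with hs₂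
    have hsub : ∀ t ∈ Icc s₁ s₂, f t ∉ closure U ∧ t ∈ Ioo (0 : ℝ) 1 := by
      intro t ht
      have : t ∈ Metric.ball s ε := by
        rw [Metric.mem_ball, Real.dist_eq, abs_lt]
        constructor <;> linarith [ht.1, ht.2]
      exact hball this
    have m1 := (hsub s₁ ⟨le_rfl, by linarith⟩).2
    have m2 := (hsub s₂ ⟨by linarith, le_rfl⟩).2
    have i1 : Icc 0 s₁ ⊆ Icc (0 : ℝ) 1 := Icc_subset_Icc le_rfl m1.2.le
    have i2 : Icc s₂ 1 ⊆ Icc (0 : ℝ) 1 := Icc_subset_Icc m2.1.le le_rfl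
    have z0 : (0 : ℝ) ∈ Icc (0 : ℝ) 1 := ⟨le_rfl, zero_le_one⟩
    have z1 : (1 : ℝ) ∈ Icc (0 : ℝ) 1 := ⟨zero_le_one, le_rfl⟩
    have b1 : b ∉ f '' Icc 0 s₁ := fun h => L.hbα (image_mono i1 h)
    have b2 : b ∉ f '' Icc s₂ 1 := fun h => L.hbα (image_mono i2 h)
    have n1 : NonSep b (f '' Icc 0 s₁) := nonSep_arc c (L.cont.mono i1) (L.inj.mono i1) b1
    have n2 : NonSep b (f '' Icc s₂ 1) := nonSep_arc c (L.cont.mono i2) (L.inj.mono i2) b2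
    have c1 : IsClosed (f '' Icc 0 s₁) := arc_isClosed (L.cont.mono i1)
    have c2 : IsClosed (f '' Icc s₂ 1) := arc_isClosed (L.cont.mono i2)
    have e1 : f '' Icc 0 s₁ ∩ β = {f 0} := by
      ext z
      constructor
      · rintro ⟨⟨t, ht, rfl⟩, hβ⟩
        have : f t ∈ f '' Icc 0 1 ∩ β := ⟨⟨t, i1 ht, rfl⟩, hβ⟩
        rw [L.inter] at this
        rcases this with h | h
        · exact h
        · have := L.inj (i1 ht) z1 h
          linarith [ht.2, m1.2]
      · rintro rfl
        exact ⟨⟨0, ⟨le_rfl, m1.1.le⟩, rfl⟩, (L.inter.symm.subset (by simp) : f 0 ∈ _ ∩ β).2⟩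
    have e2 : (f '' Icc 0 s₁ ∪ β) ∩ f '' Icc s₂ 1 = {f 1} := by
      ext z
      constructor
      · rintro ⟨h', ⟨t, ht, rfl⟩⟩
        rcases h' with ⟨t', ht', he⟩ | hβ
        · have := L.inj (i1 ht') (i2 ht) he
          linarith [ht'.2, ht.1]
        have : f t ∈ f '' Icc 0 1 ∩ β := ⟨⟨t, i2 ht, rfl⟩, hβ⟩
        rw [L.inter] at this
        rcases this with h | h
        · have := L.inj (i2 ht) z0 h
          linarith [ht.1, m2.1]
        · exact h
      · rintro rfl
        exact ⟨Or.inr (L.inter.symm.subset (by simp) : f 1 ∈ _ ∩ β).2, ⟨1, ⟨m2.2.le, le_rfl⟩, rfl⟩⟩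
    have nA := NonSep.union c c1 L.closed b1 L.hbβ (by rw [e1]; exact isPreconnected_singleton)
      n1 L.nonsep
    have nB := NonSep.union c (c1.union L.closed) c2 (by simp only [mem_union, not_or]; exact ⟨b1, L.hbβ⟩)
      b2 (by rw [e2]; exact isPreconnected_singleton) nA n2
    set K := f '' Icc 0 s₁ ∪ β ∪ f '' Icc s₂ 1 with hK
    have hKT : K ⊆ f '' Icc 0 1 ∪ β := by
      rintro z ((h | h) | h)
      · exact Or.inl (image_mono i1 h)
      · exact Or.inr h
      · exact Or.inl (image_mono i2 h)
    have hpre : IsPreconnected (connectedComponentIn Kᶜ b) := isPreconnected_connectedComponentIn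
    obtain ⟨z, hz, hzf⟩ := preconn_inter_frontier hpre (u := U)
      ⟨a, nB a fun h => ha (hKT h), mem_connectedComponentIn ha⟩
      ⟨a₀, nB a₀ fun h => ha₀ (hKT h), hsep⟩
    have hzK : z ∉ K := connectedComponentIn_subset _ _ hz
    rcases frontier_component_subset hT a hzf with ⟨t, ht, rfl⟩ | h
    · by_cases h1 : t ≤ s₁
      · exact hzK (Or.inl (Or.inl ⟨t, ⟨ht.1, h1⟩, rfl⟩))
      by_cases h2 : s₂ ≤ t
      · exact hzK (Or.inr ⟨t, ⟨h2, ht.2⟩, rfl⟩)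
      · exact (hsub t ⟨by linarith, by linarith⟩).1 (frontier_subset_closure hzf)
    · exact hzK (Or.inl (Or.inr h))
  have hcl : s ∈ closure (Ioo (0 : ℝ) 1) := by
    rw [closure_Ioo (by norm_num)]; exact hs
  have := (L.cont s hs).mono (Ioo_subset_Icc_self) |>.mem_closure_image hcl
  exact closure_minimal (by rintro _ ⟨t, ht, rfl⟩; exact main t ht) isClosed_closure this

lemma Loop.exists_not_out (c : PlaneChart S b) {f : ℝ → S} {β : Set S} (L : Loop b f β) :
    ∃ a, a ∉ f '' Icc 0 1 ∪ β ∧ ¬ Out b (f '' Icc 0 1 ∪ β) a :=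
  _root_.exists_not_out c (arc_isClosed L.cont) L.closed L.hbα L.hbβ
    (isPreconnected_Icc.image _ L.cont) L.preconn (fun h => zero_ne_one
      (L.inj ⟨le_rfl, zero_le_one⟩ ⟨zero_le_one, le_rfl⟩ h)) L.inter

/-- If `γ` crosses the loop at an interior point of its arc, the local sides lie on the two
sides of the loop. -/
lemma Loop.crossing (c : PlaneChart S b) {f : ℝ → S} {β : Set S} (L : Loop b f β)
    {γ : Set S} {p : S} (hpf : p ∈ f '' Icc 0 1) (hpβ : p ∉ β) {V : Set S} (hV : V ∈ 𝓝 p)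
    (hVβ : ∀ z ∈ V, z ∉ β)
    {C₁ C₂ : Set S} (hVC : V \ (f '' Icc 0 1) = C₁ ∪ C₂) (hC₁ : IsPreconnected C₁)
    (hC₂ : IsPreconnected C₂) (hg₁ : (γ ∩ C₁).Nonempty) (hg₂ : (γ ∩ C₂).Nonempty) :
    ∃ A B : Set S, V \ (f '' Icc 0 1) = A ∪ B ∧ IsPreconnected A ∧ (γ ∩ A).Nonempty ∧
      (γ ∩ B).Nonempty ∧ (∀ z ∈ A, Out b (f '' Icc 0 1 ∪ β) z) ∧
      (∀ z ∈ B, z ∉ f '' Icc 0 1 ∪ β ∧ ¬ Out b (f '' Icc 0 1 ∪ β) z) := by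
  set T := f '' Icc 0 1 ∪ β with hT
  obtain ⟨a₀, ha₀, hno⟩ := L.exists_not_out c
  have hbT : b ∉ T := by
    rintro (h | h)
    exacts [L.hbα h, L.hbβ h]
  obtain ⟨s, hs, rfl⟩ := hpf
  have k1 := L.mem_closure c hbT ha₀ hno hs
  have k2 := L.mem_closure c ha₀ hbT (fun h => hno (by
    unfold Out; rw [← connectedComponentIn_eq h]; exact mem_connectedComponentIn ha₀)) hs
  obtain ⟨u, huV, hu⟩ := mem_closure_iff_nhds.1 k1 V hV
  obtain ⟨w, hwV, hw⟩ := mem_closure_iff_nhds.1 k2 V hV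
  have huo : Out b T u := hu
  have hwT : w ∉ T := connectedComponentIn_subset _ _ hw
  have hwo : ¬ Out b T w := fun h => hno (h.trans isPreconnected_connectedComponentIn hw
    (mem_connectedComponentIn ha₀) fun z hz => connectedComponentIn_subset _ _ hz)
  have sub : ∀ z ∈ C₁ ∪ C₂, z ∉ T := by
    intro z hz
    rw [← hVC] at hz
    rintro (h | h)
    exacts [hz.2 h, hVβ z hz.1 h]
  have huC : u ∈ C₁ ∪ C₂ := by rw [← hVC]; exact ⟨huV, fun h => huo.notMem (Or.inl h)⟩
  have hwC : w ∈ C₁ ∪ C₂ := by rw [← hVC]; exact ⟨hwV, fun h => hwT (Or.inl h)⟩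
  have t1 : ∀ x ∈ C₁, ∀ y ∈ C₁, Out b T x → Out b T y := fun x hx y hy h =>
    h.trans hC₁ hx hy fun z hz => sub z (Or.inl hz)
  have t2 : ∀ x ∈ C₂, ∀ y ∈ C₂, Out b T x → Out b T y := fun x hx y hy h =>
    h.trans hC₂ hx hy fun z hz => sub z (Or.inr hz)
  rcases huC with huC | huC
  · have hwC' : w ∈ C₂ := by
      rcases hwC with h | h
      · exact absurd (t1 u huC w h huo) hwo
      · exact h
    exact ⟨C₁, C₂, hVC, hC₁, hg₁, hg₂, fun z hz => t1 u huC z hz huo,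
      fun z hz => ⟨sub z (Or.inr hz), fun h => hwo (t2 z hz w hwC' h)⟩⟩
  · have hwC' : w ∈ C₁ := by
      rcases hwC with h | h
      · exact h
      · exact absurd (t2 u huC w h huo) hwo
    exact ⟨C₂, C₁, by rw [hVC, union_comm], hC₂, hg₂, hg₁, fun z hz => t2 u huC z hz huo,
      fun z hz => ⟨sub z (Or.inl hz), fun h => hwo (t1 z hz w hwC' h)⟩⟩

end Sph

lemma exists_planeChart (b : ↥(Metric.sphere (0 : EuclideanSpace ℝ (Fin 3)) 1)) :
    Nonempty (PlaneChart _ b) := by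
  haveI : Fact (Module.finrank ℝ (EuclideanSpace ℝ (Fin 3)) = 2 + 1) := ⟨by simp⟩
  let e := stereographic' 2 b
  let q : ℂ ≃ₗᵢ[ℝ] EuclideanSpace ℝ (Fin 2) := Complex.orthonormalBasisOneI.repr
  have hs : e.source = {b}ᶜ := stereographic'_source b
  have ht : e.target = univ := stereographic'_target b
  exact ⟨{
    φ := fun s => q.symm (e s)
    ψ := fun z => e.symm (q z)
    cφ := q.symm.continuous.comp_continuousOn (hs ▸ e.continuousOn)
    cψ := by
      have : ContinuousOn e.symm univ := ht ▸ e.continuousOn_symm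
      exact (continuousOn_univ.1 this).comp q.continuous
    φψ := fun z => by simp [e.right_inv (x := q z) (by rw [ht]; trivial)]
    ψφ := fun s h => by simp [e.left_inv (x := s) (by rw [hs]; exact h)]
    ψb := fun z h => by
      have := e.map_target (x := q z) (by rw [ht]; trivial)
      rw [hs] at this
      exact this h }⟩

lemma sphere_locallyConnected :
    LocallyConnectedSpace ↥(Metric.sphere (0 : EuclideanSpace ℝ (Fin 3)) 1) := by
  haveI : Fact (Module.finrank ℝ (EuclideanSpace ℝ (Fin 3)) = 2 + 1) := ⟨by simp⟩
  exact ChartedSpace.locallyConnectedSpace (EuclideanSpace ℝ (Fin 2)) _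

section Graph
variable {S : Type*} [TopologicalSpace S] [CompactSpace S] [T2Space S] [LocallyConnectedSpace S]
  {b : S} {n : ℕ} {D : GoodDrawing n S}

/-- `f` parametrizes the arc of `D` from `u` to `v`. -/
structure Par (D : GoodDrawing n S) (u v : Fin n) (f : ℝ → S) : Prop where
  cont : ContinuousOn f (Icc 0 1)
  inj : InjOn f (Icc 0 1)
  f0 : f 0 = D.vtx u
  f1 : f 1 = D.vtx v
  eq : D.arc u v = f '' Icc 0 1

lemma exists_par (D : GoodDrawing n S) {u v : Fin n} (h : u ≠ v) : ∃ f, Par D u v f := by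
  obtain ⟨f, h1, h2, h3, h4, h5⟩ := D.isArc u v h
  exact ⟨f, h1, h2, h3, h4, h5⟩

lemma Par.mem {u v : Fin n} {f : ℝ → S} (P : Par D u v f) {t : ℝ} (h0 : 0 ≤ t) (h1 : t ≤ 1) :
    f t ∈ D.arc u v := by rw [P.eq]; exact ⟨t, ⟨h0, h1⟩, rfl⟩

lemma Par.eq_of {u v : Fin n} {f : ℝ → S} (P : Par D u v f) {s t : ℝ} (hs : s ∈ Icc (0 : ℝ) 1)
    (ht : t ∈ Icc (0 : ℝ) 1) (h : f s = f t) : s = t := P.inj hs ht h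

lemma Par.rev {u v : Fin n} {f : ℝ → S} (P : Par D u v f) : Par D v u (fun t => f (1 - t)) where
  cont := P.cont.comp (by fun_prop) fun t ht => ⟨by linarith [ht.2], by linarith [ht.1]⟩
  inj := fun s hs t ht h => by
    have := P.inj (show 1 - s ∈ Icc (0 : ℝ) 1 from ⟨by linarith [hs.2], by linarith [hs.1]⟩)
      (show 1 - t ∈ Icc (0 : ℝ) 1 from ⟨by linarith [ht.2], by linarith [ht.1]⟩) h
    linarith
  f0 := by simp [P.f1]
  f1 := by simp [P.f0]
  eq := by
    rw [D.arc_symm, P.eq]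
    ext z
    constructor
    · rintro ⟨t, ht, rfl⟩
      exact ⟨1 - t, ⟨by linarith [ht.2], by linarith [ht.1]⟩, by simp⟩
    · rintro ⟨t, ht, rfl⟩
      exact ⟨1 - t, ⟨by linarith [ht.2], by linarith [ht.1]⟩, rfl⟩

lemma left_mem (D : GoodDrawing n S) {u v : Fin n} (h : u ≠ v) : D.vtx u ∈ D.arc u v := by
  obtain ⟨f, P⟩ := exists_par D h
  rw [← P.f0]; exact P.mem le_rfl zero_le_one

lemma right_mem (D : GoodDrawing n S) {u v : Fin n} (h : u ≠ v) : D.vtx v ∈ D.arc u v := by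
  rw [D.arc_symm]; exact left_mem D h.symm

lemma garc_closed (D : GoodDrawing n S) {u v : Fin n} (h : u ≠ v) : IsClosed (D.arc u v) := by
  obtain ⟨f, P⟩ := exists_par D h
  rw [P.eq]; exact arc_isClosed P.cont

lemma garc_preconn (D : GoodDrawing n S) {u v : Fin n} (h : u ≠ v) :
    IsPreconnected (D.arc u v) := by
  obtain ⟨f, P⟩ := exists_par D h
  rw [P.eq]; exact isPreconnected_Icc.image _ P.cont

lemma garc_nonsep (c : PlaneChart S b) (D : GoodDrawing n S) {u v : Fin n} (h : u ≠ v)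
    (hb : b ∉ D.arc u v) : NonSep b (D.arc u v) := by
  obtain ⟨f, P⟩ := exists_par D h
  rw [P.eq] at hb ⊢; exact nonSep_arc c P.cont P.inj hb

/-- Arcs sharing an endpoint meet only there. -/
lemma adj_eq (D : GoodDrawing n S) {u v w : Fin n} (h1 : u ≠ v) (h2 : u ≠ w) (h3 : v ≠ w) {z : S}
    (hz : z ∈ D.arc u v) (hz' : z ∈ D.arc u w) : z = D.vtx u := by
  have : z ∈ D.arc u v ∩ D.arc u w := ⟨hz, hz'⟩
  rw [D.adj_arcs u v w h1 h2 h3] at this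
  exact this

lemma Par.isPreconnected_image {u v : Fin n} {f : ℝ → S} (P : Par D u v f) {I : Set ℝ}
    (hI : IsPreconnected I) (h : I ⊆ Icc 0 1) : IsPreconnected (f '' I) :=
  hI.image _ (P.cont.mono h)

/-- The triangle loop. -/
lemma triLoop (c : PlaneChart S b) (hb : ∀ u v, u ≠ v → b ∉ D.arc u v) {v w x : Fin n}
    (hvw : v ≠ w) (hvx : v ≠ x) (hwx : w ≠ x) {f : ℝ → S} (P : Par D v w f) :
    Loop b f (D.arc v x ∪ D.arc x w) where
  cont := P.cont
  inj := P.inj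
  closed := (garc_closed D hvx).union (garc_closed D hwx.symm)
  preconn := (garc_preconn D hvx).union _ (right_mem D hvx) (left_mem D hwx.symm)
    (garc_preconn D hwx.symm)
  nonsep := by
    refine NonSep.union c (garc_closed D hvx) (garc_closed D hwx.symm) (hb _ _ hvx)
      (hb _ _ hwx.symm) ?_ (garc_nonsep c D hvx (hb _ _ hvx)) (garc_nonsep c D hwx.symm
        (hb _ _ hwx.symm))
    rw [D.arc_symm v x, D.adj_arcs x v w hvx.symm hwx.symm hvw]
    exact isPreconnected_singleton
  inter := by
    rw [← P.eq, inter_union_distrib_left, D.adj_arcs v w x hvw hvx hwx, D.arc_symm v w,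
      D.arc_symm x w, D.adj_arcs w v x hvw.symm hwx hvx, P.f0, P.f1]
    rfl
  hbα := by rw [← P.eq]; exact hb _ _ hvw
  hbβ := by rintro (h | h); exacts [hb _ _ hvx h, hb _ _ hwx.symm h]

/-- The quadrilateral loop. -/
lemma quadLoop (c : PlaneChart S b) (hb : ∀ u v, u ≠ v → b ∉ D.arc u v) {p q r s : Fin n}
    (hpq : p ≠ q) (hpr : p ≠ r) (hps : p ≠ s) (hqr : q ≠ r) (hqs : q ≠ s) (hrs : r ≠ s)
    (h1 : D.arc p q ∩ D.arc r s = ∅) (h2 : D.arc q r ∩ D.arc s p = ∅)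
    {f : ℝ → S} (P : Par D p q f) :
    Loop b f (D.arc q r ∪ D.arc r s ∪ D.arc s p) where
  cont := P.cont
  inj := P.inj
  closed := ((garc_closed D hqr).union (garc_closed D hrs)).union (garc_closed D hps.symm)
  preconn := ((garc_preconn D hqr).union _ (right_mem D hqr) (left_mem D hrs)
    (garc_preconn D hrs)).union _ (Or.inr (right_mem D hrs)) (left_mem D hps.symm)
      (garc_preconn D hps.symm)
  nonsep := by
    refine NonSep.union c ((garc_closed D hqr).union (garc_closed D hrs)) (garc_closed D hps.symm)
      (by rintro (h | h); exacts [hb _ _ hqr h, hb _ _ hrs h])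
      (hb _ _ hps.symm) ?_ (NonSep.union c (garc_closed D hqr) (garc_closed D hrs) (hb _ _ hqr)
        (hb _ _ hrs) ?_ (garc_nonsep c D hqr (hb _ _ hqr)) (garc_nonsep c D hrs (hb _ _ hrs)))
      (garc_nonsep c D hps.symm (hb _ _ hps.symm))
    · rw [union_inter_distrib_right, h2, empty_union, D.arc_symm r s,
        D.adj_arcs s r p hrs.symm hps.symm hpr.symm]
      exact isPreconnected_singleton
    · rw [D.arc_symm q r, D.adj_arcs r q s hqr.symm hrs hqs]
      exact isPreconnected_singleton
  inter := by
    rw [← P.eq, inter_union_distrib_left, inter_union_distrib_left, h1, union_empty,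
      D.arc_symm s p, D.adj_arcs p q s hpq hps hqs, D.arc_symm p q,
      D.adj_arcs q p r hpq.symm hqr hpr, P.f0, P.f1, union_comm]
    rfl
  hbα := by rw [← P.eq]; exact hb _ _ hpq
  hbβ := by rintro ((h | h) | h); exacts [hb _ _ hqr h, hb _ _ hrs h, hb _ _ hps.symm h]

/-- Face convexity relative to a point of the outer face. -/
def Conv (D : GoodDrawing n S) (b : S) : Prop :=
  ∀ a₁ a₂ a₃ : Fin n, a₁ ≠ a₂ → a₁ ≠ a₃ → a₂ ≠ a₃ → ∀ Δ : Set S,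
    IsClosedSide (D.tri a₁ a₂ a₃) Δ → b ∉ Δ → D.ConvexDisc Δ

lemma sideM (c : PlaneChart S b) (hb : ∀ u v, u ≠ v → b ∉ D.arc u v) (hconv : Conv D b)
    {v w x y : Fin n}
    (hvw : v ≠ w) (hvx : v ≠ x) (hvy : v ≠ y) (hwx : w ≠ x) (hwy : w ≠ y) (hxy : x ≠ y)
    {g : ℝ → S} (Q : Par D x y g) {s : ℝ} (hs : s ∈ Ioo (0 : ℝ) 1) (hp : g s ∈ D.arc v w) :
    (∀ t ∈ Ioc s 1, Out b (D.arc v w ∪ (D.arc v x ∪ D.arc x w)) (g t)) ∧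
    (∀ t ∈ Ioo 0 s, g t ∉ D.arc v w ∪ (D.arc v x ∪ D.arc x w) ∧
      ¬ Out b (D.arc v w ∪ (D.arc v x ∪ D.arc x w)) (g t)) ∧
    ∃ V ∈ 𝓝 (g s), ∃ A : Set S, (∀ z ∈ V, z ∉ D.arc v x ∪ D.arc x w) ∧ A ⊆ V \ D.arc v w ∧
      IsPreconnected A ∧ (D.arc x y ∩ A).Nonempty ∧
      (∀ z ∈ V \ D.arc v w, Out b (D.arc v w ∪ (D.arc v x ∪ D.arc x w)) z → z ∈ A) ∧
      (∀ z ∈ A, Out b (D.arc v w ∪ (D.arc v x ∪ D.arc x w)) z) := by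
  obtain ⟨f, P⟩ := exists_par D hvw
  have L := triLoop c hb hvw hvx hwx P
  have hs' : s ∈ Icc (0 : ℝ) 1 := ⟨hs.1.le, hs.2.le⟩
  have h0 : (0 : ℝ) ∈ Icc (0 : ℝ) 1 := ⟨le_rfl, zero_le_one⟩
  have hβ : ∀ t ∈ Ioc (0 : ℝ) 1, g t ∉ D.arc v x ∪ D.arc x w := by
    intro t ht h
    have hm := Q.mem ht.1.le ht.2
    have : g t = g 0 := by
      rw [Q.f0]
      rcases h with h | h
      · rw [D.arc_symm] at h
        exact adj_eq D hxy hvx.symm hvy.symm hm h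
      · exact adj_eq D hxy hwx.symm hwy.symm hm h
    exact ht.1.ne' (Q.eq_of ⟨ht.1.le, ht.2⟩ h0 this)
  have hin := D.indep_arcs v w x y hvw hxy hvx hvy hwx hwy
  have hα : ∀ t ∈ Icc (0 : ℝ) 1, t ≠ s → g t ∉ D.arc v w := fun t ht hts h =>
    hts (Q.eq_of ht hs' (hin.1 ⟨h, Q.mem ht.1 ht.2⟩ ⟨hp, Q.mem hs'.1 hs'.2⟩))
  set T := D.arc v w ∪ (D.arc v x ∪ D.arc x w) with hT
  have hTf : f '' Icc 0 1 ∪ (D.arc v x ∪ D.arc x w) = T := by rw [hT, P.eq]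
  have hgT : ∀ t ∈ Ioc (0 : ℝ) 1, t ≠ s → g t ∉ T := by
    rintro t ht hts (h | h)
    · exact hα t ⟨ht.1.le, ht.2⟩ hts h
    · exact hβ t ht h
  have hpβ := hβ s ⟨hs.1, hs.2.le⟩
  have hx : g 0 ∈ T := by rw [Q.f0]; exact Or.inr (Or.inl (right_mem D hvx))
  have hpT : g s ∈ T := Or.inl hp
  obtain ⟨V, hV, hVU, C₁, C₂, hVC, -, hC₁, hC₂, hg₁, hg₂⟩ :=
    (hin.2 (g s) ⟨hp, Q.mem hs'.1 hs'.2⟩).1.2.2 _ (L.closed.isOpen_compl.mem_nhds hpβ)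
  rw [P.eq] at hVC
  obtain ⟨A, B, hAB, hA, ⟨z₁, hz₁, hz₁A⟩, ⟨z₂, hz₂, hz₂B⟩, oA, oB⟩ :=
    L.crossing c (γ := D.arc x y) (by rw [← P.eq]; exact hp) hpβ hV (fun z hz => hVU hz) hVC
      hC₁ hC₂ hg₁ hg₂
  rw [hTf] at oA oB
  rw [← P.eq] at hAB
  have hlow : IsPreconnected (g '' Ioo 0 s) := Q.isPreconnected_image isPreconnected_Ioo
    fun t ht => ⟨ht.1.le, (ht.2.trans hs.2).le⟩
  have hup : IsPreconnected (g '' Ioc s 1) := Q.isPreconnected_image isPreconnected_Ioc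
    fun t ht => ⟨(hs.1.trans ht.1).le, ht.2⟩
  have hlowT : ∀ z ∈ g '' Ioo 0 s, z ∉ T := by
    rintro _ ⟨t, ht, rfl⟩
    exact hgT t ⟨ht.1, (ht.2.trans hs.2).le⟩ ht.2.ne
  have hupT : ∀ z ∈ g '' Ioc s 1, z ∉ T := by
    rintro _ ⟨t, ht, rfl⟩
    exact hgT t ⟨hs.1.trans ht.1, ht.2⟩ ht.1.ne'
  have key : ∀ z ∈ D.arc x y, z ∉ T → z ∈ g '' Ioo 0 s ∨ z ∈ g '' Ioc s 1 := by
    intro z hz hzT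
    rw [Q.eq] at hz
    obtain ⟨t, ht, rfl⟩ := hz
    rcases lt_trichotomy t s with h | rfl | h
    · rcases ht.1.lt_or_eq with h' | rfl
      · exact Or.inl ⟨t, ⟨h', h⟩, rfl⟩
      · exact absurd hx hzT
    · exact absurd hpT hzT
    · exact Or.inr ⟨t, ⟨h, ht.2⟩, rfl⟩
  have my : g 1 ∈ g '' Ioc s 1 := ⟨1, ⟨hs.2, le_rfl⟩, rfl⟩
  have hbT : b ∉ T := by
    rintro (h | h | h)
    exacts [hb _ _ hvw h, hb _ _ hvx h, hb _ _ hwx.symm h]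
  have hy : Out b T (g 1) := by
    by_contra hno
    have hz₁l : z₁ ∈ g '' Ioo 0 s := by
      rcases key z₁ hz₁ (oA z₁ hz₁A).notMem with h | h
      · exact h
      · exact absurd ((oA z₁ hz₁A).trans hup h my hupT) hno
    have hcon := hconv v x w hvx hvw hwx.symm (connectedComponentIn Tᶜ (g 1) ∪ T)
      ⟨g 1, by
        have : D.tri v x w = T := by rw [hT, union_comm]; rfl
        rw [this]
        exact ⟨hupT _ my, rfl⟩⟩ (by
        rintro (h | h)
        · apply hno
          unfold Out
          rw [← connectedComponentIn_eq h]
          exact mem_connectedComponentIn (hupT _ my)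
        · exact hbT h)
    have hsub := hcon x y hxy (Or.inr (by rw [← Q.f0]; exact hx))
      (Or.inl (by rw [← Q.f1]; exact mem_connectedComponentIn (hupT _ my)))
    rcases hsub hz₁ with h | h
    · apply hno
      have o := oA z₁ hz₁A
      unfold Out at o ⊢
      rw [connectedComponentIn_eq o, ← connectedComponentIn_eq h]
      exact mem_connectedComponentIn (hupT _ my)
    · exact (oA z₁ hz₁A).notMem h
  refine ⟨fun t ht => hy.trans hup my ⟨t, ht, rfl⟩ hupT, fun t ht => ?_, V, hV, A,
    fun z hz => hVU hz, ?_, hA, ⟨z₁, hz₁, hz₁A⟩, ?_, oA⟩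
  · refine ⟨hlowT _ ⟨t, ht, rfl⟩, fun ho => ?_⟩
    rcases key z₂ hz₂ (oB z₂ hz₂B).1 with h | h
    · exact (oB z₂ hz₂B).2 (ho.trans hlow ⟨t, ht, rfl⟩ h hlowT)
    · exact (oB z₂ hz₂B).2 (hy.trans hup my h hupT)
  · rw [hAB]; exact subset_union_left
  · intro z hz ho
    rw [hAB] at hz
    rcases hz with h | h
    · exact h
    · exact absurd ho (oB z h).2

lemma noSecond (c : PlaneChart S b) (hb : ∀ u v, u ≠ v → b ∉ D.arc u v) (hconv : Conv D b)
    {v w x y : Fin n}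
    (hvw : v ≠ w) (hvx : v ≠ x) (hvy : v ≠ y) (hwx : w ≠ x) (hwy : w ≠ y) (hxy : x ≠ y)
    {f g : ℝ → S} (P : Par D v w f) (Q : Par D x y g) {r s : ℝ} (hr : r ∈ Ioo (0 : ℝ) 1)
    (hs : s ∈ Ioo (0 : ℝ) 1) (hrs : f r = g s) : D.arc v x ∩ D.arc w y = ∅ := by
  rw [eq_empty_iff_forall_notMem]
  rintro q ⟨hq1, hq2⟩
  have hp : g s ∈ D.arc v w := hrs ▸ P.mem hr.1.le hr.2.le
  obtain ⟨sup, slow, V, hV, A, hVβ, hAV, hA, ⟨a, haxy, haA⟩, hVA, oA⟩ :=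
    sideM c hb hconv hvw hvx hvy hwx hwy hxy Q hs hp
  obtain ⟨h, H⟩ := exists_par D hvx
  have hin := D.indep_arcs v w x y hvw hxy hvx hvy hwx hwy
  have hin2 := D.indep_arcs v x w y hvx hwy hvw hvy hwx.symm hxy
  have If : Icc 0 r ⊆ Icc (0 : ℝ) 1 := Icc_subset_Icc_right hr.2.le
  have Ig : Icc 0 s ⊆ Icc (0 : ℝ) 1 := Icc_subset_Icc_right hs.2.le
  have fsub : f '' Icc 0 r ⊆ D.arc v w := by rw [P.eq]; exact image_mono If
  have gsub : g '' Icc 0 s ⊆ D.arc x y := by rw [Q.eq]; exact image_mono Ig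
  have hpg : g s ∈ D.arc x y := Q.mem hs.1.le hs.2.le
  have pf : g s ∈ f '' Icc 0 r := hrs ▸ ⟨r, ⟨hr.1.le, le_rfl⟩, rfl⟩
  have pg : g s ∈ g '' Icc 0 s := ⟨s, ⟨hs.1.le, le_rfl⟩, rfl⟩
  have cf := arc_isClosed (P.cont.mono If)
  have cg := arc_isClosed (Q.cont.mono Ig)
  have bf : b ∉ f '' Icc 0 r := fun h => hb _ _ hvw (fsub h)
  have bg : b ∉ g '' Icc 0 s := fun h => hb _ _ hxy (gsub h)
  set β := f '' Icc 0 r ∪ g '' Icc 0 s with hβ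
  have L : Loop b h β := {
    cont := H.cont
    inj := H.inj
    closed := cf.union cg
    preconn := (P.isPreconnected_image isPreconnected_Icc If).union _ pf pg
      (Q.isPreconnected_image isPreconnected_Icc Ig)
    nonsep := by
      refine NonSep.union c cf cg bf bg ?_ (nonSep_arc c (P.cont.mono If) (P.inj.mono If) bf)
        (nonSep_arc c (Q.cont.mono Ig) (Q.inj.mono Ig) bg)
      exact (hin.1.anti (inter_subset_inter fsub gsub)).isPreconnected
    inter := by
      rw [← H.eq]
      ext z
      constructor
      · rintro ⟨h1, h2 | h2⟩
        · left; rw [H.f0]; exact adj_eq D hvx hvw hwx.symm h1 (fsub h2)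
        · right; rw [H.f1]
          exact adj_eq D hvx.symm hxy hvy (by rw [D.arc_symm]; exact h1) (gsub h2)
      · rintro (rfl | rfl)
        · exact ⟨H.mem le_rfl zero_le_one, Or.inl ⟨0, ⟨le_rfl, hr.1.le⟩, by rw [H.f0, P.f0]⟩⟩
        · exact ⟨H.mem zero_le_one le_rfl, Or.inr ⟨0, ⟨le_rfl, hs.1.le⟩, by rw [H.f1, Q.f0]⟩⟩
    hbα := by rw [← H.eq]; exact hb _ _ hvx
    hbβ := by rintro (h | h); exacts [bf h, bg h] }
  -- `w y` misses `β`
  have wyβ : ∀ z ∈ D.arc w y, z ∉ β := by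
    rintro z hz (⟨t, ht, rfl⟩ | ⟨t, ht, rfl⟩)
    · have := adj_eq D hwy hvw.symm hvy.symm hz
        (by rw [D.arc_symm]; exact P.mem ht.1 (ht.2.trans hr.2.le))
      rw [← P.f1] at this
      have := P.eq_of (If ht) ⟨zero_le_one, le_rfl⟩ this
      linarith [ht.2, hr.2]
    · have := adj_eq D hwy.symm hxy.symm hwx (by rw [D.arc_symm]; exact hz)
        (by rw [D.arc_symm]; exact Q.mem ht.1 (ht.2.trans hs.2.le))
      rw [← Q.f1] at this
      have := Q.eq_of (Ig ht) ⟨zero_le_one, le_rfl⟩ this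
      linarith [ht.2, hs.2]
  obtain ⟨V', hV', hVU, C₁, C₂, hVC, -, hC₁, hC₂, hg₁, hg₂⟩ :=
    (hin2.2 q ⟨hq1, hq2⟩).1.2.2 _ (L.closed.isOpen_compl.mem_nhds (wyβ q hq2))
  rw [H.eq] at hVC
  obtain ⟨A', B', -, -, ⟨z₁, hz₁, hz₁A⟩, ⟨z₂, hz₂, hz₂B⟩, oA', oB'⟩ :=
    L.crossing c (γ := D.arc w y) (by rw [← H.eq]; exact hq1) (wyβ q hq2) hV'
      (fun z hz => hVU hz) hVC hC₁ hC₂ hg₁ hg₂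
  rw [← H.eq] at oA' oB'
  set J := D.arc v x ∪ β with hJ
  have hJc : IsClosed J := (garc_closed D hvx).union L.closed
  obtain ⟨k, K⟩ := exists_par D hwy
  obtain ⟨m, hm, rfl⟩ : q ∈ k '' Icc 0 1 := by rw [← K.eq]; exact hq2
  have kJ : ∀ t ∈ Icc (0 : ℝ) 1, t ≠ m → k t ∉ J := by
    rintro t ht htm (h | h)
    · exact htm (K.eq_of ht hm (hin2.1 ⟨h, K.mem ht.1 ht.2⟩ ⟨hq1, hq2⟩))
    · exact wyβ _ (K.mem ht.1 ht.2) h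
  have hm0 : 0 < m := by
    rcases hm.1.lt_or_eq with h | rfl
    · exact h
    · rw [K.f0] at hq1
      exact absurd hq1 (D.vtx_not_mem v x w hvx hvw.symm hwx)
  have hm1 : m < 1 := by
    rcases hm.2.lt_or_eq with h | rfl
    · exact h
    · rw [K.f1] at hq1
      exact absurd hq1 (D.vtx_not_mem v x y hvx hvy.symm hxy.symm)
  have klow : IsPreconnected (k '' Ico 0 m) := K.isPreconnected_image isPreconnected_Ico
    fun t ht => ⟨ht.1, (ht.2.trans hm1).le⟩
  have kup : IsPreconnected (k '' Ioc m 1) := K.isPreconnected_image isPreconnected_Ioc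
    fun t ht => ⟨(hm0.trans ht.1).le, ht.2⟩
  have klowJ : ∀ z ∈ k '' Ico 0 m, z ∉ J := by
    rintro _ ⟨t, ht, rfl⟩
    exact kJ t ⟨ht.1, (ht.2.trans hm1).le⟩ ht.2.ne
  have kupJ : ∀ z ∈ k '' Ioc m 1, z ∉ J := by
    rintro _ ⟨t, ht, rfl⟩
    exact kJ t ⟨(hm0.trans ht.1).le, ht.2⟩ ht.1.ne'
  have kk : ∀ z ∈ D.arc w y, z ∉ J → z ∈ k '' Ico 0 m ∨ z ∈ k '' Ioc m 1 := by
    intro z hz hzJ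
    rw [K.eq] at hz
    obtain ⟨t, ht, rfl⟩ := hz
    rcases lt_trichotomy t m with h | rfl | h
    · exact Or.inl ⟨t, ⟨ht.1, h⟩, rfl⟩
    · exact absurd (Or.inl hq1) hzJ
    · exact Or.inr ⟨t, ⟨h, ht.2⟩, rfl⟩
  have mw : k 0 ∈ k '' Ico 0 m := ⟨0, ⟨le_rfl, hm0⟩, rfl⟩
  have my : k 1 ∈ k '' Ioc m 1 := ⟨1, ⟨hm1, le_rfl⟩, rfl⟩
  -- the far parts of `v w` and `x y` miss `J`
  have fJ : ∀ z ∈ f '' Ioc r 1, z ∉ J := by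
    rintro _ ⟨t, ht, rfl⟩ (h | h | h)
    · have := adj_eq D hvw hvx hwx (P.mem (hr.1.trans ht.1).le ht.2) h
      rw [← P.f0] at this
      have := P.eq_of ⟨(hr.1.trans ht.1).le, ht.2⟩ ⟨le_rfl, zero_le_one⟩ this
      linarith [ht.1, hr.1]
    · obtain ⟨t', ht', e⟩ := h
      have := P.eq_of (If ht') ⟨(hr.1.trans ht.1).le, ht.2⟩ e
      linarith [ht.1, ht'.2]
    · have e : f t = f r := by
        rw [hrs]
        exact hin.1 ⟨P.mem (hr.1.trans ht.1).le ht.2, gsub h⟩ ⟨hp, hpg⟩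
      have := P.eq_of ⟨(hr.1.trans ht.1).le, ht.2⟩ ⟨hr.1.le, hr.2.le⟩ e
      linarith [ht.1]
  have gJ : ∀ z ∈ g '' Ioc s 1, z ∉ J := by
    rintro _ ⟨t, ht, rfl⟩ (h | h | h)
    · exact (sup t ht).notMem (Or.inr (Or.inl h))
    · exact (sup t ht).notMem (Or.inl (fsub h))
    · obtain ⟨t', ht', e⟩ := h
      have := Q.eq_of (Ig ht') ⟨(hs.1.trans ht.1).le, ht.2⟩ e
      linarith [ht.1, ht'.2]
  have hx : g 0 ∈ D.arc v x := by rw [Q.f0]; exact right_mem D hvx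
  have gout : ∀ t ∈ Icc (0 : ℝ) 1, Out b (D.arc v w ∪ (D.arc v x ∪ D.arc x w)) (g t) →
      t ∈ Ioc s 1 := by
    intro t ht ho
    rcases lt_trichotomy t s with h | rfl | h
    · rcases ht.1.lt_or_eq with h' | rfl
      · exact absurd ho (slow t ⟨h', h⟩).2
      · exact absurd (Or.inr (Or.inl hx)) ho.notMem
    · exact absurd (Or.inl hp) ho.notMem
    · exact ⟨h, ht.2⟩
  have AJ : ∀ z ∈ A, z ∉ J := by
    rintro z hz (h | h | h)
    · exact hVβ z (hAV hz).1 (Or.inl h)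
    · exact (hAV hz).2 (fsub h)
    · obtain ⟨t, ht, rfl⟩ := h
      have := gout t (Ig ht) (oA _ hz)
      linarith [this.1, ht.2]
  have hag : a ∈ g '' Ioc s 1 := by
    rw [Q.eq] at haxy
    obtain ⟨t, ht, rfl⟩ := haxy
    exact ⟨t, gout t ht (oA _ haA), rfl⟩
  -- a point of `v w` beyond `p`, close to `p`
  have hfc : ContinuousAt f r := P.cont.continuousAt (Icc_mem_nhds hr.1 hr.2)
  have hVr : V ∈ 𝓝 (f r) := by rw [hrs]; exact hV
  have hev : ∀ᶠ t in 𝓝[>] r, f t ∈ interior V ∧ t ∈ Ioc r 1 :=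
    ((hfc.eventually_mem (interior_mem_nhds.2 hVr)).filter_mono nhdsWithin_le_nhds).and
      (Ioc_mem_nhdsGT hr.2)
  obtain ⟨t, htV, ht⟩ := hev.exists
  have LT := triLoop c hb hvw hvx hwx P
  have hbT : b ∉ D.arc v w ∪ (D.arc v x ∪ D.arc x w) := by
    rintro (h | h | h)
    exacts [hb _ _ hvw h, hb _ _ hvx h, hb _ _ hwx.symm h]
  have hs2 := slow (s / 2) ⟨by linarith [hs.1], by linarith [hs.1]⟩
  have hcl : f t ∈ closure (connectedComponentIn (D.arc v w ∪ (D.arc v x ∪ D.arc x w))ᶜ b) := by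
    have := LT.mem_closure c (a := b) (a₀ := g (s / 2)) (s := t)
    rw [← P.eq] at this
    exact this hbT hs2.1 hs2.2 ⟨(hr.1.trans ht.1).le, ht.2⟩
  have fup : IsPreconnected (f '' Ioc r 1) := P.isPreconnected_image isPreconnected_Ioc
    fun t ht => ⟨(hr.1.trans ht.1).le, ht.2⟩
  have gup : IsPreconnected (g '' Ioc s 1) := Q.isPreconnected_image isPreconnected_Ioc
    fun t ht => ⟨(hs.1.trans ht.1).le, ht.2⟩
  set W := connectedComponentIn Jᶜ (k 0) with hW
  have hk0 : k 0 = f 1 := by rw [K.f0, P.f1]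
  have hk1 : k 1 = g 1 := by rw [K.f1, Q.f1]
  have fW : f '' Ioc r 1 ⊆ W :=
    fup.subset_connectedComponentIn (hk0 ▸ ⟨1, ⟨hr.2, le_rfl⟩, rfl⟩) fJ
  have hWo : IsOpen W := hJc.isOpen_compl.connectedComponentIn
  obtain ⟨z, ⟨hzW, hzV⟩, hzO⟩ := mem_closure_iff.1 hcl (W ∩ interior V)
    (hWo.inter isOpen_interior) ⟨fW ⟨t, ht, rfl⟩, htV⟩
  have hzA : z ∈ A := hVA z ⟨interior_subset hzV, fun h => Out.notMem hzO (Or.inl h)⟩ hzO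
  have hY : IsPreconnected (A ∪ g '' Ioc s 1) := hA.union a haA hag gup
  have hyW : k 1 ∈ W := by
    rw [hW, connectedComponentIn_eq hzW]
    refine hY.subset_connectedComponentIn (Or.inl hzA) ?_
      (Or.inr (hk1 ▸ ⟨1, ⟨hs.2, le_rfl⟩, rfl⟩))
    rintro z (h | h)
    exacts [AJ z h, gJ z h]
  have hWJ : ∀ z ∈ W, z ∉ J := fun z hz => connectedComponentIn_subset _ _ hz
  have hWp : IsPreconnected W := isPreconnected_connectedComponentIn
  have h0W : k 0 ∈ W := mem_connectedComponentIn (klowJ _ mw)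
  have hall : Out b J (k 0) := by
    rcases kk z₁ hz₁ (oA' _ hz₁A).notMem with h | h
    · exact (oA' _ hz₁A).trans klow h mw klowJ
    · exact ((oA' _ hz₁A).trans kup h my kupJ).trans hWp hyW h0W hWJ
  have hall1 : Out b J (k 1) := hall.trans hWp h0W hyW hWJ
  rcases kk z₂ hz₂ (oB' _ hz₂B).1 with h | h
  · exact (oB' _ hz₂B).2 (hall.trans klow mw h klowJ)
  · exact (oB' _ hz₂B).2 (hall1.trans kup my h kupJ)

end Graph

/-- One side of a quadrilateral lies in the frontier of the face of `b`. -/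
lemma quad_frontier {S : Type*} [TopologicalSpace S] [CompactSpace S] [T2Space S]
    [LocallyConnectedSpace S] {b : S} {n : ℕ} {D : GoodDrawing n S}
    (c : PlaneChart S b) (hb : ∀ u v, u ≠ v → b ∉ D.arc u v) {p q r s : Fin n}
    (hpq : p ≠ q) (hpr : p ≠ r) (hps : p ≠ s) (hqr : q ≠ r) (hqs : q ≠ s) (hrs : r ≠ s)
    (h1 : D.arc p q ∩ D.arc r s = ∅) (h2 : D.arc q r ∩ D.arc s p = ∅) {C : Set S}
    (hC : C = D.arc p q ∪ (D.arc q r ∪ D.arc r s ∪ D.arc s p)) {a : S} (ha : a ∉ C)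
    (hno : ¬ Out b C a) : D.arc p q ⊆ frontier (connectedComponentIn Cᶜ b) := by
  obtain ⟨f, P⟩ := exists_par D hpq
  have L := quadLoop c hb hpq hpr hps hqr hqs hrs h1 h2 P
  have e : f '' Icc 0 1 ∪ (D.arc q r ∪ D.arc r s ∪ D.arc s p) = C := by rw [hC, P.eq]
  have hbC : b ∉ C := by
    rw [← e]
    rintro (h | h)
    exacts [L.hbα h, L.hbβ h]
  intro z hz
  have hzC : z ∈ C := by rw [hC]; exact Or.inl hz
  rw [P.eq] at hz
  obtain ⟨t, ht, rfl⟩ := hz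
  have hcl := L.mem_closure c (a := b) (a₀ := a) (s := t)
  rw [e] at hcl
  exact ⟨hcl hbC ha hno ht, fun h => connectedComponentIn_subset _ _ (interior_subset h) hzC⟩

/-- In a face-convex drawing with outer face `F`, if the `K_4` on `v, w, x, y` is drawn
with `D[vw]` crossing `D[xy]`, then `F` lies in the face of the `K_4` bounded by the
4-cycle `(v, x, w, y, v)`. -/
theorem outer_face_in_quadrilateral (n : ℕ) (D : GoodDrawing n SpherePt)
    (F : Set SpherePt) (hFC : D.FaceConvex F) (v w x y : Fin n)
    (hvw : v ≠ w) (hvx : v ≠ x) (hvy : v ≠ y) (hwx : w ≠ x) (hwy : w ≠ y) (hxy : x ≠ y)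
    (hcross : D.Crosses v w x y) :
    ∃ G : Set SpherePt, IsFaceOf (D.image {v, w, x, y}) G ∧
      frontier G = D.arc v x ∪ D.arc x w ∪ D.arc w y ∪ D.arc y v ∧ F ⊆ G := by
  have hlc : LocallyConnectedSpace SpherePt := sphere_locallyConnected
  obtain ⟨⟨b, hbI, hF⟩, hconvF⟩ := hFC
  obtain ⟨c⟩ := exists_planeChart b
  have hbF : b ∈ F := by rw [hF]; exact mem_connectedComponentIn hbI
  have arc_sub : ∀ (W : Set (Fin n)) (u v : Fin n), u ∈ W → v ∈ W → u ≠ v →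
      D.arc u v ⊆ D.image W := fun W u v hu hv huv z hz =>
    Or.inr (mem_iUnion₂.2 ⟨u, hu, mem_iUnion₂.2 ⟨v, hv, mem_iUnion.2 ⟨huv, hz⟩⟩⟩)
  have hb : ∀ u v, u ≠ v → b ∉ D.arc u v := fun u v huv h =>
    hbI (arc_sub univ u v trivial trivial huv h)
  have hconv : Conv D b := fun a₁ a₂ a₃ h1 h2 h3 Δ hΔ hbΔ =>
    hconvF a₁ a₂ a₃ h1 h2 h3 Δ hΔ fun h => hbΔ (h hbF)
  obtain ⟨p, ⟨hpf, hpg⟩, hpv⟩ := hcross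
  obtain ⟨f, P⟩ := exists_par D hvw
  obtain ⟨g, Q⟩ := exists_par D hxy
  rw [P.eq] at hpf
  rw [Q.eq] at hpg
  obtain ⟨r, hr, rfl⟩ := hpf
  obtain ⟨s, hs, hgs⟩ := hpg
  have hr' : r ∈ Ioo (0 : ℝ) 1 := by
    refine ⟨lt_of_le_of_ne hr.1 ?_, lt_of_le_of_ne hr.2 ?_⟩
    · rintro rfl; exact hpv ⟨v, P.f0.symm⟩
    · rintro rfl; exact hpv ⟨w, P.f1.symm⟩
  have hs' : s ∈ Ioo (0 : ℝ) 1 := by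
    refine ⟨lt_of_le_of_ne hs.1 ?_, lt_of_le_of_ne hs.2 ?_⟩
    · rintro rfl; exact hpv ⟨x, by rw [← hgs, Q.f0]⟩
    · rintro rfl; exact hpv ⟨y, by rw [← hgs, Q.f1]⟩
  have n1 : D.arc v x ∩ D.arc w y = ∅ :=
    noSecond c hb hconv hvw hvx hvy hwx hwy hxy P Q hr' hs' hgs.symm
  have n2 : D.arc x w ∩ D.arc y v = ∅ := by
    have := noSecond c hb hconv hvw.symm hwx hwy hvx hvy hxy P.rev Q (r := 1 - r)
      ⟨by linarith [hr'.2], by linarith [hr'.1]⟩ hs' (by simp [hgs])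
    rwa [D.arc_symm w x, D.arc_symm v y] at this
  set C := D.arc v x ∪ D.arc x w ∪ D.arc w y ∪ D.arc y v with hC
  have hbC : b ∉ C := by
    rintro (((h | h) | h) | h)
    exacts [hb _ _ hvx h, hb _ _ hwx.symm h, hb _ _ hwy h, hb _ _ hvy.symm h]
  have hCc : IsClosed C := (((garc_closed D hvx).union (garc_closed D hwx.symm)).union
    (garc_closed D hwy)).union (garc_closed D hvy.symm)
  have fC : ∀ t ∈ Ioo (0 : ℝ) 1, f t ∉ C := by
    intro t ht h
    have hm := P.mem ht.1.le ht.2.le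
    have hm' := hm
    rw [D.arc_symm] at hm'
    have ht' : t ∈ Icc (0 : ℝ) 1 := ⟨ht.1.le, ht.2.le⟩
    have e : f t = f 0 ∨ f t = f 1 := by
      rw [P.f0, P.f1]
      rcases h with ((h | h) | h) | h
      · exact Or.inl (adj_eq D hvw hvx hwx hm h)
      · rw [D.arc_symm] at h; exact Or.inr (adj_eq D hvw.symm hwx hvx hm' h)
      · exact Or.inr (adj_eq D hvw.symm hwy hvy hm' h)
      · rw [D.arc_symm] at h; exact Or.inl (adj_eq D hvw hvy hwy hm h)
    rcases e with e | e
    · exact ht.1.ne' (P.eq_of ht' ⟨le_rfl, zero_le_one⟩ e)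
    · exact ht.2.ne (P.eq_of ht' ⟨zero_le_one, le_rfl⟩ e)
  have gC : ∀ t ∈ Ioo (0 : ℝ) 1, g t ∉ C := by
    intro t ht h
    have hm := Q.mem ht.1.le ht.2.le
    have hm' := hm
    rw [D.arc_symm] at hm'
    have ht' : t ∈ Icc (0 : ℝ) 1 := ⟨ht.1.le, ht.2.le⟩
    have e : g t = g 0 ∨ g t = g 1 := by
      rw [Q.f0, Q.f1]
      rcases h with ((h | h) | h) | h
      · rw [D.arc_symm] at h; exact Or.inl (adj_eq D hxy hvx.symm hvy.symm hm h)
      · exact Or.inl (adj_eq D hxy hwx.symm hwy.symm hm h)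
      · rw [D.arc_symm] at h; exact Or.inr (adj_eq D hxy.symm hwy.symm hwx.symm hm' h)
      · exact Or.inr (adj_eq D hxy.symm hvy.symm hvx.symm hm' h)
    rcases e with e | e
    · exact ht.1.ne' (Q.eq_of ht' ⟨le_rfl, zero_le_one⟩ e)
    · exact ht.2.ne (Q.eq_of ht' ⟨zero_le_one, le_rfl⟩ e)
  -- a point of `x y` beyond the crossing
  have hp : g s ∈ D.arc v w := hgs ▸ P.mem hr.1 hr.2
  set t := (s + 1) / 2 with ht
  have ht1 : s < t := by rw [ht]; linarith [hs'.2]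
  have ht2 : t < 1 := by rw [ht]; linarith [hs'.2]
  have o1 := (sideM c hb hconv hvw hvx hvy hwx hwy hxy Q hs' hp).1 t ⟨ht1, ht2.le⟩
  have o2 := ((sideM c hb hconv hvw hvy hvx hwy hwx hxy.symm Q.rev (s := 1 - s)
    ⟨by linarith [hs'.2], by linarith [hs'.1]⟩ (by simpa using hp)).2.1 (1 - t)
    ⟨by linarith, by linarith⟩).2
  simp only [sub_sub_cancel] at o2
  have hno : ¬ Out b C (g t) := by
    intro ho
    apply o2
    have hbT : b ∉ D.arc v w ∪ (D.arc v x ∪ D.arc x w) := by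
      rintro (h | h | h)
      exacts [hb _ _ hvw h, hb _ _ hvx h, hb _ _ hwx.symm h]
    have hInter : (D.arc v w ∪ (D.arc v x ∪ D.arc x w)) ∩ C = D.arc v x ∪ D.arc x w := by
      apply Subset.antisymm
      · rintro z ⟨h1 | h1, h2⟩
        · rw [P.eq] at h1
          obtain ⟨t, ht, rfl⟩ := h1
          rcases ht.1.lt_or_eq with h | rfl
          · rcases ht.2.lt_or_eq with h' | rfl
            · exact absurd h2 (fC t ⟨h, h'⟩)
            · rw [P.f1]; exact Or.inr (right_mem D hwx.symm)
          · rw [P.f0]; exact Or.inl (left_mem D hvx)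
        · exact h1
      · exact fun z h => ⟨Or.inr h, Or.inl (Or.inl h)⟩
    have hj := janiszewski c ((garc_closed D hvw).union ((garc_closed D hvx).union
      (garc_closed D hwx.symm))) hCc hbT hbC (by
        rw [hInter]
        exact (garc_preconn D hvx).union _ (right_mem D hvx) (left_mem D hwx.symm)
          (garc_preconn D hwx.symm)) o1 ho
    refine hj.mono ?_
    rintro z (h | h | h)
    · exact Or.inl (Or.inl h)
    · rw [D.arc_symm] at h; exact Or.inr (Or.inr h)
    · rw [D.arc_symm] at h; exact Or.inr (Or.inl (Or.inr h))
  have htI : t ∈ Ioo (0 : ℝ) 1 := ⟨hs'.1.trans ht1, ht2⟩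
  have hY : IsPreconnected (f '' Ioo 0 1 ∪ g '' Ioo 0 1) :=
    (P.isPreconnected_image isPreconnected_Ioo Ioo_subset_Icc_self).union (f r)
      ⟨r, hr', rfl⟩ ⟨s, hs', hgs⟩ (Q.isPreconnected_image isPreconnected_Ioo Ioo_subset_Icc_self)
  have hYC : ∀ z ∈ f '' Ioo 0 1 ∪ g '' Ioo 0 1, z ∉ C := by
    rintro _ (⟨t, ht, rfl⟩ | ⟨t, ht, rfl⟩)
    exacts [fC t ht, gC t ht]
  have hYno : ∀ z ∈ f '' Ioo 0 1 ∪ g '' Ioo 0 1, ¬ Out b C z := fun z hz ho =>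
    hno (ho.trans hY hz (Or.inr ⟨t, htI, rfl⟩) hYC)
  have hvC : D.vtx v ∈ C := Or.inl (Or.inl (Or.inl (left_mem D hvx)))
  have hxC : D.vtx x ∈ C := Or.inl (Or.inl (Or.inl (right_mem D hvx)))
  have hwC : D.vtx w ∈ C := Or.inl (Or.inr (left_mem D hwy))
  have hyC : D.vtx y ∈ C := Or.inl (Or.inr (right_mem D hwy))
  set G := connectedComponentIn Cᶜ b with hG
  have hGC : ∀ z ∈ G, z ∉ C := fun z hz => connectedComponentIn_subset _ _ hz
  have hGf : ∀ z ∈ G, z ∉ D.arc v w := by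
    intro z hz h
    rw [P.eq] at h
    obtain ⟨t, ht, rfl⟩ := h
    rcases ht.1.lt_or_eq with h | rfl
    · rcases ht.2.lt_or_eq with h' | rfl
      · exact hYno _ (Or.inl ⟨t, ⟨h, h'⟩, rfl⟩) hz
      · exact hGC _ hz (P.f1 ▸ hwC)
    · exact hGC _ hz (P.f0 ▸ hvC)
  have hGg : ∀ z ∈ G, z ∉ D.arc x y := by
    intro z hz h
    rw [Q.eq] at h
    obtain ⟨t, ht, rfl⟩ := h
    rcases ht.1.lt_or_eq with h | rfl
    · rcases ht.2.lt_or_eq with h' | rfl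
      · exact hYno _ (Or.inr ⟨t, ⟨h, h'⟩, rfl⟩) hz
      · exact hGC _ hz (Q.f1 ▸ hyC)
    · exact hGC _ hz (Q.f0 ▸ hxC)
  have s1 : D.arc v x ⊆ C := fun z h => Or.inl (Or.inl (Or.inl h))
  have s2 : D.arc x w ⊆ C := fun z h => Or.inl (Or.inl (Or.inr h))
  have s3 : D.arc w y ⊆ C := fun z h => Or.inl (Or.inr h)
  have s4 : D.arc y v ⊆ C := fun z h => Or.inr h
  have hGI : ∀ z ∈ G, z ∉ D.image {v, w, x, y} := by
    rintro z hz (⟨u, hu, rfl⟩ | h)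
    · rcases hu with rfl | rfl | rfl | rfl
      exacts [hGC _ hz hvC, hGC _ hz hwC, hGC _ hz hxC, hGC _ hz hyC]
    · simp only [mem_iUnion] at h
      obtain ⟨u, hu, u', hu', hne, h⟩ := h
      have h' := h
      rw [D.arc_symm] at h'
      have a1 : z ∉ D.arc v x := fun h => hGC z hz (s1 h)
      have a2 : z ∉ D.arc x w := fun h => hGC z hz (s2 h)
      have a3 : z ∉ D.arc w y := fun h => hGC z hz (s3 h)
      have a4 : z ∉ D.arc y v := fun h => hGC z hz (s4 h)
      have a5 := hGf z hz
      have a6 := hGg z hz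
      rcases hu with rfl | rfl | rfl | rfl <;> rcases hu' with rfl | rfl | rfl | rfl <;>
        first | exact hne rfl | contradiction
  have hCI : C ⊆ D.image {v, w, x, y} := by
    rintro z (((h | h) | h) | h)
    · exact arc_sub _ v x (by simp) (by simp) hvx h
    · exact arc_sub _ x w (by simp) (by simp) hwx.symm h
    · exact arc_sub _ w y (by simp) (by simp) hwy h
    · exact arc_sub _ y v (by simp) (by simp) hvy.symm h
  have hbG : b ∈ G := mem_connectedComponentIn hbC
  refine ⟨G, ⟨b, hGI b hbG, ?_⟩, ?_, ?_⟩
  · apply Subset.antisymm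
    · exact isPreconnected_connectedComponentIn.subset_connectedComponentIn hbG hGI
    · exact connectedComponentIn_mono b (compl_subset_compl.2 hCI)
  · apply Subset.antisymm
    · exact frontier_component_subset hCc b
    · have haC := gC t htI
      rintro z (((h | h) | h) | h)
      · exact quad_frontier c hb hvx hvw hvy hwx.symm hxy hwy n1 n2
          (by rw [hC]; simp only [union_assoc]) haC hno h
      · exact quad_frontier c hb hwx.symm hxy hvx.symm hwy hvw.symm hvy.symm n2
          (by rw [inter_comm]; exact n1)
          (by rw [hC]; ext z; simp only [mem_union]; tauto) haC hno h
      · exact quad_frontier c hb hwy hvw.symm hwx hvy.symm hxy.symm hvx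
          (by rw [inter_comm]; exact n1) (by rw [inter_comm]; exact n2)
          (by rw [hC]; ext z; simp only [mem_union]; tauto) haC hno h
      · exact quad_frontier c hb hvy.symm hxy.symm hwy.symm hvx hvw hwx.symm
          (by rw [inter_comm]; exact n2) n1
          (by rw [hC]; ext z; simp only [mem_union]; tauto) haC hno h
  · rw [hF]
    refine connectedComponentIn_mono b (compl_subset_compl.2 ?_)
    rintro z (((h | h) | h) | h)
    · exact arc_sub univ v x trivial trivial hvx h
    · exact arc_sub univ x w trivial trivial hwx.symm h
    · exact arc_sub univ w y trivial trivial hwy h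
    · exact arc_sub univ y v trivial trivial hvy.symm h

end
end

section
/- Let D be a face-convex good drawing of K_n with outer face F and let u, v, x, y be distinct vertices of K_n. If x and y are on different sides of uv, then the subdrawing D[{u,v,x,y}] with the edge-arc D[xy] removed has no crossing; that is, the five edge-arcs on {u,v,x,y} other than D[xy] are pairwise non-crossing. -/
open Set Topology

noncomputable section

namespace JC

/-- `φ` has a continuous logarithm on `K`. -/
def HasLog {X : Type*} [TopologicalSpace X] (K : Set X) (φ : X → ℂ) : Prop :=
  ∃ g : X → ℂ, ContinuousOn g K ∧ ∀ z ∈ K, Complex.exp (g z) = φ z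

lemma exp_const {X : Type*} [TopologicalSpace X] {K : Set X} (hK : IsPreconnected K)
    {k : X → ℂ} (hk : ContinuousOn k K) {c : ℂ} (h : ∀ z ∈ K, Complex.exp (k z) = c)
    {a b : X} (ha : a ∈ K) (hb : b ∈ K) : k a = k b := by
  refine Complex.isCoveringMap_exp.constOn_of_comp hK hk ?_ ha hb
  intro a ha b hb
  simp [h a ha, h b hb]

lemma HasLog.shift {X : Type*} [TopologicalSpace X] {K : Set X} {e : X → ℂ}
    (he : ContinuousOn e K) {w w' : ℂ} (h : HasLog K (fun z => e z - w))
    (hd : ∀ z ∈ K, ‖w - w'‖ < ‖e z - w‖) : HasLog K (fun z => e z - w') := by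
  obtain ⟨g, hg, hg'⟩ := h
  have hne : ∀ z ∈ K, e z - w ≠ 0 := fun z hz h0 => by
    have := hd z hz
    rw [h0, norm_zero] at this
    exact absurd this (not_lt.2 (norm_nonneg _))
  have hs : ∀ z ∈ K, 1 + (w - w') / (e z - w) ∈ Complex.slitPlane := fun z hz => by
    apply Complex.mem_slitPlane_of_norm_lt_one
    rw [norm_div, div_lt_one (norm_pos_iff.2 (hne z hz))]
    exact hd z hz
  refine ⟨fun z => g z + Complex.log (1 + (w - w') / (e z - w)), ?_, ?_⟩
  · refine hg.add (ContinuousOn.clog ?_ hs)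
    exact continuousOn_const.add (continuousOn_const.div (he.sub continuousOn_const) hne)
  · intro z hz
    rw [Complex.exp_add, hg' z hz, Complex.exp_log (Complex.slitPlane_ne_zero (hs z hz))]
    field_simp [hne z hz]
    ring

/-- A nonzero constant perturbed by something smaller has a logarithm. -/
lemma hasLog_small {X : Type*} [TopologicalSpace X] {K : Set X} {e : X → ℂ}
    (he : ContinuousOn e K) {w c : ℂ} 
    (hd : ∀ z ∈ K, ‖e z - c‖ < ‖c - w‖) : HasLog K (fun z => e z - w) := by
  rcases K.eq_empty_or_nonempty with rfl | ⟨z0, hz0⟩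
  · exact ⟨fun _ => 0, continuousOn_empty _, by simp⟩
  have hne : c - w ≠ 0 := norm_pos_iff.1 ((norm_nonneg _).trans_lt (hd z0 hz0))
  have hs : ∀ z ∈ K, 1 + (e z - c) / (c - w) ∈ Complex.slitPlane := fun z hz => by
    apply Complex.mem_slitPlane_of_norm_lt_one
    rw [norm_div, div_lt_one (norm_pos_iff.2 hne)]
    exact hd z hz
  refine ⟨fun z => Complex.log (c - w) + Complex.log (1 + (e z - c) / (c - w)), ?_, ?_⟩
  · refine continuousOn_const.add (ContinuousOn.clog ?_ hs)
    exact continuousOn_const.add ((he.sub continuousOn_const).div_const _)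
  · intro z hz
    rw [Complex.exp_add, Complex.exp_log hne,
      Complex.exp_log (Complex.slitPlane_ne_zero (hs z hz))]
    field_simp
    ring

lemma no_ext {h : ℂ → ℂ} (hc : Continuous h) (h0 : ∀ z, h z ≠ 0) {a : ℂ} {R : ℝ}
    (hR : ∀ z, R ≤ ‖z‖ → h z = z - a) : False := by
  obtain ⟨G, ⟨-, hG⟩, -⟩ := Complex.isCoveringMapOn_exp.existsUnique_continuousMap_lifts
    (⟨h, hc⟩ : C(ℂ, ℂ)) (a₀ := 0) (e₀ := Complex.log (h 0)) (Complex.exp_log (h0 0))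
    (fun z => h0 z)
  have hG' : ∀ z, Complex.exp (G z) = h z := fun z => congrFun hG z
  set ρ : ℝ := |R| + ‖a‖ + 1 with hρ
  have hρ0 : 0 < ρ := by positivity
  set c : ℝ → ℂ := fun θ => a + ρ * Complex.exp (θ * Complex.I) with hcdef
  have hcc : Continuous c := by fun_prop
  have hexp : ∀ θ ∈ (univ : Set ℝ), Complex.exp (G (c θ) - θ * Complex.I) = (ρ : ℂ) := by
    intro θ _
    rw [Complex.exp_sub, hG', hR, hcdef]
    · have := Complex.exp_ne_zero (θ * Complex.I)
      field_simp
      ring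
    · have h1 : ‖(ρ : ℂ) * Complex.exp (θ * Complex.I)‖ = ρ := by
        rw [norm_mul, Complex.norm_exp_ofReal_mul_I, Complex.norm_real, Real.norm_eq_abs,
          abs_of_pos hρ0, mul_one]
      have h2 := norm_sub_le (c θ) a
      have h3 : c θ - a = (ρ : ℂ) * Complex.exp (θ * Complex.I) := by simp [hcdef]
      rw [h3, h1] at h2
      have := le_abs_self R
      linarith
  have := exp_const isPreconnected_univ (k := fun θ : ℝ => G (c θ) - θ * Complex.I)
    (by fun_prop) hexp (mem_univ 0) (mem_univ (2 * Real.pi))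
  have hcc : c (2 * Real.pi) = c 0 := by
    simp [hcdef, Complex.exp_two_pi_mul_I]
  simp only [hcc] at this
  have h4 : ((2 * Real.pi : ℝ) : ℂ) * Complex.I = 0 := by
    have h5 : ((0 : ℝ) : ℂ) * Complex.I = 0 := by simp
    linear_combination h5 + this
  simp [Real.pi_ne_zero] at h4

lemma HasLog.union {X : Type*} [TopologicalSpace X] {K₁ K₂ : Set X} (h₁ : IsClosed K₁)
    (h₂ : IsClosed K₂) (h : IsPreconnected (K₁ ∩ K₂)) {φ : X → ℂ} 
    (hl₁ : HasLog K₁ φ) (hl₂ : HasLog K₂ φ) : HasLog (K₁ ∪ K₂) φ := by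
  classical
  obtain ⟨g₁, hg₁, e₁⟩ := hl₁
  obtain ⟨g₂, hg₂, e₂⟩ := hl₂
  have hk : ∃ c : ℂ, Complex.exp c = 1 ∧ ∀ z ∈ K₁ ∩ K₂, g₁ z = g₂ z + c := by
    rcases (K₁ ∩ K₂).eq_empty_or_nonempty with h0 | ⟨z0, hz0⟩
    · exact ⟨0, by simp, by simp [h0]⟩
    have hexp : ∀ z ∈ K₁ ∩ K₂, Complex.exp (g₁ z - g₂ z) = 1 := fun z hz => by
      rw [Complex.exp_sub, e₁ z hz.1, ← e₂ z hz.2, div_self (Complex.exp_ne_zero _)]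
    refine ⟨g₁ z0 - g₂ z0, hexp z0 hz0, fun z hz => ?_⟩
    have : g₁ z - g₂ z = g₁ z0 - g₂ z0 := exp_const h (k := fun z => g₁ z - g₂ z)
      ((hg₁.mono inter_subset_left).sub (hg₂.mono inter_subset_right)) hexp hz hz0
    linear_combination this
  obtain ⟨c, hc, hcz⟩ := hk
  set g : X → ℂ := fun z => if z ∈ K₁ then g₁ z else g₂ z + c with hg
  have E₁ : EqOn g g₁ K₁ := fun z hz => by simp [hg, hz]
  have E₂ : EqOn g (fun z => g₂ z + c) K₂ := fun z hz => by
    by_cases hz' : z ∈ K₁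
    · simp [hg, hz', hcz z ⟨hz', hz⟩]
    · simp [hg, hz']
  refine ⟨g, ?_, ?_⟩
  · exact (hg₁.congr E₁).union_of_isClosed ((hg₂.add continuousOn_const).congr E₂) h₁ h₂
  · rintro z (hz | hz)
    · rw [E₁ hz, e₁ z hz]
    · rw [E₂ hz]
      simp only
      rw [Complex.exp_add, e₂ z hz, hc, mul_one]

instance : Fact (Module.finrank ℝ (EuclideanSpace ℝ (Fin 3)) = 2 + 1) := ⟨by simp⟩

instance : LocallyConnectedSpace SpherePt :=
  ChartedSpace.locallyConnectedSpace (EuclideanSpace ℝ (Fin 2)) SpherePt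

/-- Stereographic projection from `b` to the complex plane. -/
def st (b : SpherePt) : OpenPartialHomeomorph SpherePt ℂ :=
  (stereographic' 2 b).trans
    (Complex.orthonormalBasisOneI.repr.symm.toHomeomorph.toOpenPartialHomeomorph)

lemma st_source (b : SpherePt) : (st b).source = {b}ᶜ := by
  simp [st]

lemma st_target (b : SpherePt) : (st b).target = univ := by
  simp [st]


lemma st_continuousOn {b : SpherePt} {K : Set SpherePt} (hb : b ∉ K) :
    ContinuousOn (st b) K := by
  refine (st b).continuousOn.mono ?_
  rw [st_source]
  exact fun z hz h => hb (h ▸ hz)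

lemma st_symm_continuous (b : SpherePt) : Continuous (st b).symm := by
  have := (st b).continuousOn_symm
  rw [st_target] at this
  exact continuousOn_univ.1 this

lemma st_inj {b z w : SpherePt} (hz : z ≠ b) (hw : w ≠ b) (h : st b z = st b w) : z = w :=
  (st b).injOn (by rw [st_source]; exact hz) (by rw [st_source]; exact hw) h

lemma st_left {b z : SpherePt} (hz : z ≠ b) : (st b).symm (st b z) = z :=
  (st b).left_inv (by rw [st_source]; exact hz)

lemma st_right {b : SpherePt} (z : ℂ) : st b ((st b).symm z) = z :=
  (st b).right_inv (by rw [st_target]; trivial)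

lemma st_symm_ne {b : SpherePt} (z : ℂ) : (st b).symm z ≠ b := by
  have := (st b).map_target (x := z) (by rw [st_target]; trivial)
  rw [st_source] at this
  exact this

lemma st_far (b : SpherePt) (M : ℝ) : ∃ N ∈ 𝓝 b, ∀ w ∈ N, w ≠ b → M < ‖st b w‖ := by
  refine ⟨((st b).symm '' Metric.closedBall 0 M)ᶜ, ?_, ?_⟩
  · refine IsOpen.mem_nhds ?_ ?_
    · exact (((isCompact_closedBall _ _).image (st_symm_continuous b)).isClosed).isOpen_compl
    · rintro ⟨z, -, hz⟩
      exact st_symm_ne z hz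
  · intro w hw hwb
    by_contra hM
    exact hw ⟨st b w, by simpa using hM, st_left hwb⟩

lemma isOpen_comp {K : Set SpherePt} (hK : IsClosed K) (a : SpherePt) :
    IsOpen (connectedComponentIn Kᶜ a) := hK.isOpen_compl.connectedComponentIn

lemma closure_comp {K : Set SpherePt} (hK : IsClosed K) {a z : SpherePt}
    (hz : z ∈ closure (connectedComponentIn Kᶜ a)) (hzK : z ∉ K) :
    z ∈ connectedComponentIn Kᶜ a := by
  have h1 : connectedComponentIn Kᶜ z ∈ 𝓝 z :=
    (isOpen_comp hK z).mem_nhds (mem_connectedComponentIn hzK)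
  obtain ⟨w, hw1, hw2⟩ := mem_closure_iff_nhds.1 hz _ h1
  rw [connectedComponentIn_eq hw2, ← connectedComponentIn_eq hw1]
  exact mem_connectedComponentIn hzK

lemma log_of_conn {K : Set SpherePt} (hK : IsClosed K) {a b : SpherePt} (hab : a ≠ b)
    (ha : a ∉ K) (hb : b ∉ K) (h : b ∈ connectedComponentIn Kᶜ a) :
    HasLog K (fun z => st b z - st b a) := by
  set Q : SpherePt → Prop := fun w => w = b ∨ HasLog K (fun z => st b z - st b w) with hQ
  have hKc := hK.isCompact
  have hc := st_continuousOn hb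
  have hbne : ∀ z ∈ K, z ≠ b := fun z hz h => hb (h ▸ hz)
  have key : ∀ w ∈ Kᶜ, ∀ᶠ w' in 𝓝 w, (Q w ↔ Q w') := by
    intro w hw
    by_cases hwb : w = b
    · subst hwb
      obtain ⟨M, hM⟩ := (hKc.image_of_continuousOn hc).isBounded.exists_norm_le
      obtain ⟨N, hN, hN'⟩ := st_far w M
      filter_upwards [hN] with w' hw'
      refine ⟨fun _ => ?_, fun _ => Or.inl rfl⟩
      by_cases h1 : w' = w
      · exact Or.inl h1
      refine Or.inr (hasLog_small hc (c := 0) fun z hz => ?_)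
      have := hM _ (mem_image_of_mem _ hz)
      have := hN' w' hw' h1
      simp
      linarith
    · have h2 : ((st b) '' K)ᶜ ∈ 𝓝 (st b w) := by
        refine IsOpen.mem_nhds ((hKc.image_of_continuousOn hc).isClosed.isOpen_compl) ?_
        rintro ⟨z, hz, hzw⟩
        exact hw (st_inj (hbne z hz) hwb hzw ▸ hz)
      obtain ⟨δ, hδ, hδ'⟩ := Metric.mem_nhds_iff.1 h2
      have h3 : ∀ z ∈ K, δ ≤ ‖st b z - st b w‖ := by
        intro z hz
        by_contra hlt
        push Not at hlt
        exact hδ' (by rw [Metric.mem_ball, dist_eq_norm]; exact hlt) (mem_image_of_mem _ hz)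
      have hcw : ContinuousAt (st b) w := (st b).continuousAt (by rw [st_source]; exact hwb)
      have h4 := hcw.eventually (Metric.ball_mem_nhds _ (half_pos hδ))
      have h5 : ∀ᶠ w' in 𝓝 w, w' ≠ b := isOpen_ne.mem_nhds hwb
      filter_upwards [h4, h5] with w' hw' hw'b
      rw [dist_eq_norm] at hw'
      have e1 : Q w ↔ HasLog K (fun z => st b z - st b w) := by simp [hQ, hwb]
      have e2 : Q w' ↔ HasLog K (fun z => st b z - st b w') := by simp [hQ, hw'b]
      rw [e1, e2]
      constructor
      · refine fun hl => hl.shift hc fun z hz => ?_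
        rw [norm_sub_rev]
        linarith [h3 z hz]
      · refine fun hl => hl.shift hc fun z hz => ?_
        have := norm_sub_norm_le (st b z - st b w) (st b w' - st b w)
        rw [sub_sub_sub_cancel_right] at this
        linarith [h3 z hz]
  have hO1 : IsOpen {w | w ∈ Kᶜ ∧ Q w} := by
    rw [isOpen_iff_mem_nhds]
    rintro w ⟨hw, hq⟩
    filter_upwards [key w hw, hK.isOpen_compl.mem_nhds hw] with w' h1 h2
    exact ⟨h2, h1.1 hq⟩
  have hO2 : IsOpen {w | w ∈ Kᶜ ∧ ¬ Q w} := by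
    rw [isOpen_iff_mem_nhds]
    rintro w ⟨hw, hq⟩
    filter_upwards [key w hw, hK.isOpen_compl.mem_nhds hw] with w' h1 h2
    exact ⟨h2, fun h => hq (h1.2 h)⟩
  by_contra hcon
  have hqa : ¬ Q a := by simp [hQ, hab, hcon]
  have hsub := connectedComponentIn_subset Kᶜ a
  obtain ⟨w, -, hw1, hw2⟩ := isPreconnected_connectedComponentIn (F := Kᶜ) (x := a) _ _ hO1 hO2
    (fun w hw => by
      by_cases hq : Q w
      · exact Or.inl ⟨hsub hw, hq⟩
      · exact Or.inr ⟨hsub hw, hq⟩)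
    ⟨b, h, hb, Or.inl rfl⟩ ⟨a, mem_connectedComponentIn ha, ha, hqa⟩
  exact hw2.2 hw1.2

lemma conn_of_log {K : Set SpherePt} (hK : IsClosed K) {a b : SpherePt} (hab : a ≠ b)
    (ha : a ∉ K) (hb : b ∉ K) (h : HasLog K (fun z => st b z - st b a)) :
    b ∈ connectedComponentIn Kᶜ a := by
  classical
  by_contra hcon
  set U := connectedComponentIn Kᶜ a with hU
  have hbU : b ∉ closure U := fun h => hcon (closure_comp hK h hb)
  obtain ⟨g, hg, hg'⟩ := h
  obtain ⟨G, hG⟩ := ContinuousMap.exists_restrict_eq hK (⟨K.domRestrict g, hg.domRestrict⟩ : C(K, ℂ))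
  have hG' : ∀ z ∈ K, G z = g z := fun z hz => congrArg (fun k : C(K, ℂ) => k ⟨z, hz⟩) hG
  have hUcomp : IsCompact (closure U) := isClosed_closure.isCompact
  obtain ⟨M, hM⟩ := (hUcomp.image_of_continuousOn (st_continuousOn hbU)).isBounded.exists_norm_le
  set P : Set ℂ := (st b).symm ⁻¹' U with hP
  set H : ℂ → ℂ := fun z => if z ∈ P then Complex.exp (G ((st b).symm z)) else z - st b a with hH
  have hHc : Continuous H := by
    have hsc := st_symm_continuous b
    refine Continuous.if ?_ (by fun_prop) (by fun_prop)
    intro z hz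
    have hz' : (st b).symm z ∈ frontier U := hsc.frontier_preimage_subset U hz
    have hzK : (st b).symm z ∈ K := by
      by_contra hzK
      have h1 := closure_comp hK (frontier_subset_closure hz') hzK
      rw [(isOpen_comp hK a).frontier_eq] at hz'
      exact hz'.2 h1
    rw [hG' _ hzK, hg' _ hzK]
    simp only [st_right]
  refine no_ext hHc (a := st b a) (R := M + 1) ?_ ?_
  · intro z
    by_cases hz : z ∈ P
    · simp [hH, hz]
    · simp only [hH, hz, if_false]
      intro h0
      apply hz
      rw [sub_eq_zero.1 h0]
      change (st b).symm (st b a) ∈ U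
      rw [st_left hab]
      exact mem_connectedComponentIn ha
  · intro z hz
    have : z ∉ P := by
      intro hzP
      have := hM _ (mem_image_of_mem _ (subset_closure hzP))
      rw [st_right] at this
      linarith
    simp [hH, this]

/-- Janiszewski's theorem. -/
lemma janiszewski {K₁ K₂ : Set SpherePt} (h₁ : IsClosed K₁) (h₂ : IsClosed K₂)
    (h : IsPreconnected (K₁ ∩ K₂)) {a b : SpherePt}
    (hc₁ : b ∈ connectedComponentIn K₁ᶜ a) (hc₂ : b ∈ connectedComponentIn K₂ᶜ a) :
    b ∈ connectedComponentIn (K₁ ∪ K₂)ᶜ a := by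
  have b1 : b ∉ K₁ := connectedComponentIn_subset _ _ hc₁
  have b2 : b ∉ K₂ := connectedComponentIn_subset _ _ hc₂
  have a1 : a ∉ K₁ := connectedComponentIn_nonempty_iff.1 ⟨b, hc₁⟩
  have a2 : a ∉ K₂ := connectedComponentIn_nonempty_iff.1 ⟨b, hc₂⟩
  have ha : a ∉ K₁ ∪ K₂ := fun h => h.elim a1 a2
  have hb : b ∉ K₁ ∪ K₂ := fun h => h.elim b1 b2
  by_cases hab : a = b
  · subst hab
    exact mem_connectedComponentIn ha
  exact conn_of_log (h₁.union h₂) hab ha hb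
    ((log_of_conn h₁ hab a1 b1 hc₁).union h₁ h₂ h (log_of_conn h₂ hab a2 b2 hc₂))

lemma small_conn {q a b : SpherePt} (ha : a ≠ q) (hb : b ≠ q) :
    ∃ N : Set SpherePt, IsOpen N ∧ q ∈ N ∧
      ∀ K, IsClosed K → K ⊆ N → b ∈ connectedComponentIn Kᶜ a := by
  by_cases hab : a = b
  · subst hab
    exact ⟨{a}ᶜ, isOpen_compl_singleton, ha.symm, fun K _ hKN =>
      mem_connectedComponentIn fun haK => hKN haK rfl⟩
  · refine ⟨(st b).source ∩ (st b) ⁻¹' Metric.ball (st b q) ‖st b q - st b a‖,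
      (st b).isOpen_inter_preimage Metric.isOpen_ball, ⟨?_, ?_⟩, ?_⟩
    · rw [st_source]; exact hb.symm
    · refine Metric.mem_ball_self (norm_pos_iff.2 (sub_ne_zero.2 fun h => ha ?_))
      exact (st_inj hb.symm hab h).symm
    · intro K hK hKN
      have hbK : b ∉ K := fun h => by
        have := (hKN h).1
        rw [st_source] at this
        exact this rfl
      have haK : a ∉ K := fun h => by
        have := (hKN h).2
        rw [mem_preimage, Metric.mem_ball, dist_eq_norm, norm_sub_rev] at this
        exact lt_irrefl _ this
      refine conn_of_log hK hab haK hbK (hasLog_small (st_continuousOn hbK) (c := st b q) ?_)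
      intro z hz
      have := (hKN hz).2
      rwa [mem_preimage, Metric.mem_ball, dist_eq_norm] at this

lemma preconn_compl {P : Set SpherePt}
    (h : ∀ a, a ∉ P → ∀ b, b ∉ P → b ∈ connectedComponentIn Pᶜ a) : IsPreconnected Pᶜ := by
  rcases (Pᶜ).eq_empty_or_nonempty with h0 | ⟨a, ha⟩
  · rw [h0]; exact isPreconnected_empty
  have : Pᶜ = connectedComponentIn Pᶜ a :=
    Subset.antisymm (fun b hb => h a ha b hb) (connectedComponentIn_subset _ _)
  rw [this]
  exact isPreconnected_connectedComponentIn

lemma jan_preconn {K₁ K₂ : Set SpherePt} (h₁ : IsClosed K₁) (h₂ : IsClosed K₂)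
    (h : IsPreconnected (K₁ ∩ K₂)) (hc₁ : IsPreconnected K₁ᶜ) (hc₂ : IsPreconnected K₂ᶜ) :
    IsPreconnected (K₁ ∪ K₂)ᶜ := by
  refine preconn_compl fun a ha b hb => janiszewski h₁ h₂ h ?_ ?_
  · exact hc₁.subset_connectedComponentIn (fun h => ha (Or.inl h)) Subset.rfl
      (fun h => hb (Or.inl h))
  · exact hc₂.subset_connectedComponentIn (fun h => ha (Or.inr h)) Subset.rfl
      (fun h => hb (Or.inr h))

lemma closed_arc {f : ℝ → SpherePt} (hf : ContinuousOn f (Icc 0 1)) {s t : ℝ} (hs : 0 ≤ s)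
    (ht : t ≤ 1) : IsClosed (f '' Icc s t) :=
  (isCompact_Icc.image_of_continuousOn (hf.mono (Icc_subset_Icc hs ht))).isClosed

/-- An arc does not separate the sphere. -/
lemma arc_preconn {f : ℝ → SpherePt} (hf : ContinuousOn f (Icc 0 1)) (hi : InjOn f (Icc 0 1))
    {s t : ℝ} (hs : 0 ≤ s) (hst : s ≤ t) (ht : t ≤ 1) : IsPreconnected (f '' Icc s t)ᶜ := by
  refine preconn_compl fun a ha b hb => ?_
  have hsub : Icc s t ⊆ Icc 0 1 := Icc_subset_Icc hs ht
  have hN : ∀ r : Icc s t, ∃ N : Set SpherePt, IsOpen N ∧ f r ∈ N ∧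
      ∀ K, IsClosed K → K ⊆ N → b ∈ connectedComponentIn Kᶜ a := fun r =>
    small_conn (fun h => ha ⟨r, r.2, h.symm⟩) (fun h => hb ⟨r, r.2, h.symm⟩)
  choose N hNo hNm hNc using hN
  have hfr : Continuous ((Icc s t).domRestrict f) := (hf.mono hsub).domRestrict
  obtain ⟨τ, h0, hmono, ⟨m, hm⟩, hτ⟩ := exists_monotone_Icc_subset_open_cover_Icc hst
    (c := fun r => (Icc s t).domRestrict f ⁻¹' N r) (fun r => (hNo r).preimage hfr)
    (fun r _ => mem_iUnion.2 ⟨r, hNm r⟩)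
  have main : ∀ k, b ∈ connectedComponentIn (f '' Icc s (τ k))ᶜ a := by
    intro k
    induction k with
    | zero =>
      have hs' : s ∈ Icc s t := ⟨le_rfl, hst⟩
      refine hNc ⟨s, hs'⟩ _ ?_ ?_
      · exact closed_arc hf hs ((τ 0).2.2.trans ht)
      · rw [h0, Icc_self, image_singleton]
        exact singleton_subset_iff.2 (hNm ⟨s, hs'⟩)
    | succ k ih =>
      have h1 : (τ k : ℝ) ≤ τ (k + 1) := hmono (Nat.le_succ k)
      have h2 : s ≤ (τ k : ℝ) := (τ k).2.1
      have h3 : (τ (k + 1) : ℝ) ≤ t := (τ (k + 1)).2.2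
      have hU : f '' Icc s (τ (k + 1)) = f '' Icc s (τ k) ∪ f '' Icc (τ k) (τ (k + 1)) := by
        rw [← image_union, Icc_union_Icc_eq_Icc h2 h1]
      rw [hU]
      obtain ⟨i, hi'⟩ := hτ k
      refine janiszewski (closed_arc hf hs (h1.trans (h3.trans ht)))
        (closed_arc hf (hs.trans h2) (h3.trans ht)) ?_ ih
        (hNc i _ (closed_arc hf (hs.trans h2) (h3.trans ht)) ?_)
      · rw [← hi.image_inter (Icc_subset_Icc hs (h1.trans (h3.trans ht)))
          (Icc_subset_Icc (hs.trans h2) (h3.trans ht))]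
        have : Icc s (τ k : ℝ) ∩ Icc (τ k) (τ (k + 1)) = {(τ k : ℝ)} := by
          ext z
          simp only [mem_inter_iff, mem_Icc, mem_singleton_iff]
          constructor
          · rintro ⟨⟨_, h⟩, h', _⟩
            exact le_antisymm h h'
          · rintro rfl
            exact ⟨⟨h2, le_rfl⟩, le_rfl, h1⟩
        rw [this, image_singleton]
        exact isPreconnected_singleton
      · rintro _ ⟨z, hz, rfl⟩
        exact hi' (a := ⟨z, h2.trans hz.1, hz.2.trans h3⟩) ⟨hz.1, hz.2⟩
  have := main m
  rwa [hm m le_rfl] at this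


/-- Every point of a closed curve is accessible from each complementary component. -/
lemma punct {f : ℝ → SpherePt} (hf : ContinuousOn f (Icc 0 1)) (hi : InjOn f (Icc 0 1))
    {P : Set SpherePt} (hP : IsClosed P) (hPc : IsPreconnected Pᶜ) (h0P : f 0 ∈ P)
    (h1P : f 1 ∈ P) (hfP : ∀ r ∈ Ioo (0 : ℝ) 1, f r ∉ P) {r : ℝ} (hr : r ∈ Ioo (0 : ℝ) 1)
    {a : SpherePt} (ha : a ∉ f '' Icc 0 1 ∪ P) :
    f r ∈ closure (connectedComponentIn (f '' Icc 0 1 ∪ P)ᶜ a) := by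
  set T := f '' Icc 0 1 ∪ P with hT
  have hTc : IsClosed T := (closed_arc hf le_rfl le_rfl).union hP
  have hr' : r ∈ Icc (0 : ℝ) 1 := Ioo_subset_Icc_self hr
  by_contra hcon
  have hca : ContinuousAt f r := hf.continuousAt (Icc_mem_nhds hr.1 hr.2)
  have hN := hca (isClosed_closure.isOpen_compl.mem_nhds hcon)
  obtain ⟨ε, hε, hε'⟩ := Metric.mem_nhds_iff.1
    (Filter.inter_mem hN (Ioo_mem_nhds hr.1 hr.2))
  set s₁ := r - ε / 2 with hs₁
  set s₂ := r + ε / 2 with hs₂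
  have b1 : s₁ ∈ Metric.ball r ε := by
    rw [Metric.mem_ball, Real.dist_eq, abs_lt]; constructor <;> linarith
  have b2 : s₂ ∈ Metric.ball r ε := by
    rw [Metric.mem_ball, Real.dist_eq, abs_lt]; constructor <;> linarith
  have i1 := (hε' b1).2
  have i2 := (hε' b2).2
  set L := f '' Icc 0 s₁ ∪ (f '' Icc s₂ 1 ∪ P) with hL
  have c1 : IsClosed (f '' Icc 0 s₁) := closed_arc hf le_rfl i1.2.le
  have c2 : IsClosed (f '' Icc s₂ 1) := closed_arc hf i2.1.le le_rfl
  have hLc : IsPreconnected Lᶜ := by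
    refine jan_preconn c1 (c2.union hP) ?_ (arc_preconn hf hi le_rfl i1.1.le i1.2.le)
      (jan_preconn c2 hP ?_ (arc_preconn hf hi i2.1.le i2.2.le le_rfl) hPc)
    · refine Subsingleton.isPreconnected ?_
      have : ∀ z ∈ f '' Icc 0 s₁ ∩ (f '' Icc s₂ 1 ∪ P), z = f 0 := by
        rintro _ ⟨⟨z, hz, rfl⟩, ⟨w, hw, hwz⟩ | hz'⟩
        · have := hi ⟨i2.1.le.trans hw.1, hw.2⟩ ⟨hz.1, hz.2.trans i1.2.le⟩ hwz
          linarith [hz.2, hw.1]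
        · by_contra hne
          refine hfP z ⟨lt_of_le_of_ne hz.1 fun h => hne (by rw [← h]), ?_⟩ hz'
          exact hz.2.trans_lt i1.2
      exact fun z hz w hw => (this z hz).trans (this w hw).symm
    · refine Subsingleton.isPreconnected ?_
      have : ∀ z ∈ f '' Icc s₂ 1 ∩ P, z = f 1 := by
        rintro _ ⟨⟨z, hz, rfl⟩, hz'⟩
        by_contra hne
        refine hfP z ⟨i2.1.trans_le hz.1, lt_of_le_of_ne hz.2 fun h => hne (by rw [h])⟩ hz'
      exact fun z hz w hw => (this z hz).trans (this w hw).symm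
  have hLT : L ⊆ T := by
    refine union_subset ?_ (union_subset ?_ subset_union_right)
    · exact (image_mono (Icc_subset_Icc le_rfl i1.2.le)).trans subset_union_left
    · exact (image_mono (Icc_subset_Icc i2.1.le le_rfl)).trans subset_union_left
  have haL : a ∈ Lᶜ := fun h => ha (hLT h)
  have hfL : f r ∈ Lᶜ := by
    rintro (⟨z, hz, hzr⟩ | ⟨z, hz, hzr⟩ | h)
    · have := hi ⟨hz.1, hz.2.trans i1.2.le⟩ hr' hzr
      linarith [hz.2]
    · have := hi ⟨i2.1.le.trans hz.1, hz.2⟩ hr' hzr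
      linarith [hz.1]
    · exact hfP r hr h
  have := hLc.subset_of_closure_inter_subset (isOpen_comp hTc a)
    ⟨a, haL, mem_connectedComponentIn ha⟩ (by
      rintro z ⟨hz1, hz2⟩
      refine closure_comp hTc hz1 ?_
      rintro (⟨w, hw, rfl⟩ | h)
      · rcases le_or_gt w s₁ with h1 | h1
        · exact hz2 (Or.inl ⟨w, ⟨hw.1, h1⟩, rfl⟩)
        rcases le_or_gt s₂ w with h2 | h2
        · exact hz2 (Or.inr (Or.inl ⟨w, ⟨h2, hw.2⟩, rfl⟩))
        · refine (hε' (a := w) ?_).1 hz1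
          rw [Metric.mem_ball, Real.dist_eq, abs_lt]; constructor <;> linarith
      · exact hz2 (Or.inr (Or.inr h)))
  exact hcon (subset_closure (this hfL))

section drawing

variable {n : ℕ} (D : GoodDrawing n SpherePt)

lemma arc_closed {u v : Fin n} (h : u ≠ v) : IsClosed (D.arc u v) := by
  obtain ⟨f, hf, -, -, -, e⟩ := D.isArc u v h
  rw [e]; exact closed_arc hf le_rfl le_rfl

lemma arc_compl {u v : Fin n} (h : u ≠ v) : IsPreconnected (D.arc u v)ᶜ := by
  obtain ⟨f, hf, hi, -, -, e⟩ := D.isArc u v h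
  rw [e]; exact arc_preconn hf hi le_rfl zero_le_one le_rfl

lemma left_mem {u v : Fin n} (h : u ≠ v) : D.vtx u ∈ D.arc u v := by
  obtain ⟨f, hf, hi, h0, -, e⟩ := D.isArc u v h
  rw [e]; exact ⟨0, by simp, h0⟩

lemma right_mem {u v : Fin n} (h : u ≠ v) : D.vtx v ∈ D.arc u v := by
  rw [D.arc_symm]; exact left_mem D h.symm

lemma adj {u v w : Fin n} (h1 : u ≠ v) (h2 : u ≠ w) (h3 : v ≠ w) {z : SpherePt}
    (hz : z ∈ D.arc u v) (hz' : z ∈ D.arc u w) : z = D.vtx u := by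
  have : z ∈ D.arc u v ∩ D.arc u w := ⟨hz, hz'⟩
  rw [D.adj_arcs u v w h1 h2 h3] at this
  exact this

lemma adj' {u v w : Fin n} (h1 : u ≠ v) (h2 : u ≠ w) (h3 : v ≠ w) {z : SpherePt}
    (hz : z ∈ D.arc v u) (hz' : z ∈ D.arc u w) : z = D.vtx u := by
  rw [D.arc_symm] at hz; exact adj D h1 h2 h3 hz hz'

lemma adj'' {u v w : Fin n} (h1 : u ≠ v) (h2 : u ≠ w) (h3 : v ≠ w) {z : SpherePt}
    (hz : z ∈ D.arc v u) (hz' : z ∈ D.arc w u) : z = D.vtx u := by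
  rw [D.arc_symm] at hz hz'; exact adj D h1 h2 h3 hz hz'

lemma tri_swap (u v w : Fin n) : D.tri v u w = D.tri u v w := by
  unfold GoodDrawing.tri
  rw [D.arc_symm v u]
  ext z; simp only [mem_union]; tauto

lemma tri_rot (u v w : Fin n) : D.tri u w v = D.tri u v w := by
  unfold GoodDrawing.tri
  rw [D.arc_symm w v]
  ext z; simp only [mem_union]; tauto

lemma tri_closed {u v w : Fin n} (h1 : u ≠ v) (h2 : u ≠ w) (h3 : v ≠ w) :
    IsClosed (D.tri u v w) :=
  ((arc_closed D h1).union (arc_closed D h3)).union (arc_closed D h2)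

lemma tri_acc {u v w : Fin n} (h1 : u ≠ v) (h2 : u ≠ w) (h3 : v ≠ w) {p a : SpherePt}
    (hp : p ∈ D.arc u v) (hpu : p ≠ D.vtx u) (hpv : p ≠ D.vtx v) (ha : a ∉ D.tri u v w) :
    p ∈ closure (connectedComponentIn (D.tri u v w)ᶜ a) := by
  obtain ⟨f, hf, hi, hf0, hf1, e⟩ := D.isArc u v h1
  have hT : D.tri u v w = f '' Icc 0 1 ∪ (D.arc v w ∪ D.arc u w) := by
    rw [← e, ← union_assoc]; rfl
  rw [e] at hp
  obtain ⟨r, hr, rfl⟩ := hp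
  rw [hT] at ha ⊢
  have m0 : (0 : ℝ) ∈ Icc (0 : ℝ) 1 := by simp
  have m1 : (1 : ℝ) ∈ Icc (0 : ℝ) 1 := by simp
  refine punct hf hi ((arc_closed D h3).union (arc_closed D h2)) ?_ ?_ ?_ ?_ ?_ ha
  · refine jan_preconn (arc_closed D h3) (arc_closed D h2) ?_ (arc_compl D h3) (arc_compl D h2)
    rw [D.arc_symm v w, D.arc_symm u w, D.adj_arcs w v u h3.symm h2.symm h1.symm]
    exact isPreconnected_singleton
  · rw [hf0]; exact Or.inr (left_mem D h2)
  · rw [hf1]; exact Or.inl (left_mem D h3)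
  · intro t ht hmem
    have ht' : t ∈ Icc (0 : ℝ) 1 := Ioo_subset_Icc_self ht
    have hA : f t ∈ D.arc u v := by rw [e]; exact ⟨t, ht', rfl⟩
    rcases hmem with h | h
    · have := adj' D h1.symm h3 h2 hA h
      rw [← hf1] at this
      exact ht.2.ne (hi ht' m1 this)
    · have := adj D h1 h2 h3 hA h
      rw [← hf0] at this
      exact ht.1.ne' (hi ht' m0 this)
  · exact ⟨lt_of_le_of_ne hr.1 fun h => hpu (by rw [← h, hf0]),
      lt_of_le_of_ne hr.2 fun h => hpv (by rw [h, hf1])⟩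

lemma half {F : Set SpherePt} (hFC : D.FaceConvex F) {u v x y : Fin n}
    (huv : u ≠ v) (hux : u ≠ x) (huy : u ≠ y) (hvx : v ≠ x) (hvy : v ≠ y) (hxy : x ≠ y)
    {f0 : SpherePt} (hf0 : f0 ∈ F)
    {g h : ℝ → SpherePt} (hg : ContinuousOn g (Icc 0 1)) (gi : InjOn g (Icc 0 1))
    (g0 : g 0 = D.vtx u) (g1 : g 1 = D.vtx x) (ge : D.arc u x = g '' Icc 0 1)
    (hh : ContinuousOn h (Icc 0 1)) (hhi : InjOn h (Icc 0 1))
    (h0 : h 0 = D.vtx v) (h1 : h 1 = D.vtx y) (he : D.arc v y = h '' Icc 0 1)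
    {s t : ℝ} (hs : s ∈ Ioo (0 : ℝ) 1) (ht : t ∈ Ioo (0 : ℝ) 1) (hst : g s = h t)
    {p : SpherePt} (hp : p ∈ D.arc u v) (hpu : p ≠ D.vtx u) (hpv : p ≠ D.vtx v)
    {q' : SpherePt} (hq'T : q' ∉ D.tri u v x)
    (hq' : q' ∉ connectedComponentIn (D.tri u v x)ᶜ f0) :
    ∃ N ∈ 𝓝 p, ∀ z ∈ N,
      z ∈ connectedComponentIn (D.arc u v ∪ (g '' Icc 0 s ∪ h '' Icc 0 t))ᶜ f0 →
      z ∈ connectedComponentIn (D.tri u v x)ᶜ f0 := by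
  set T := D.tri u v x with hT
  set KF := connectedComponentIn Tᶜ f0 with hKF
  have hTc : IsClosed T := tri_closed D huv hux hvx
  have m0 : (0 : ℝ) ∈ Icc (0 : ℝ) 1 := by simp
  have m1 : (1 : ℝ) ∈ Icc (0 : ℝ) 1 := by simp
  have ms : s ∈ Icc (0 : ℝ) 1 := Ioo_subset_Icc_self hs
  have mt : t ∈ Icc (0 : ℝ) 1 := Ioo_subset_Icc_self ht
  have hFT : f0 ∉ T := by
    obtain ⟨⟨c, hc, rfl⟩, -⟩ := hFC
    have := connectedComponentIn_subset _ _ hf0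
    intro hm
    apply this
    right
    have key : ∀ a b : Fin n, a ≠ b → f0 ∈ D.arc a b →
        f0 ∈ ⋃ u ∈ (univ : Set (Fin n)), ⋃ v ∈ (univ : Set (Fin n)), ⋃ (_ : u ≠ v), D.arc u v := by
      intro a b hab hm
      simp only [mem_iUnion]
      exact ⟨a, trivial, b, trivial, hab, hm⟩
    rcases hm with (hm | hm) | hm
    · exact key _ _ huv hm
    · exact key _ _ hvx hm
    · exact key _ _ hux hm
  have hgB : ∀ r ∈ Icc (0 : ℝ) 1, g r ∈ D.arc u x := fun r hr => by
    rw [ge]; exact ⟨r, hr, rfl⟩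
  have hhE : ∀ r ∈ Icc (0 : ℝ) 1, h r ∈ D.arc v y := fun r hr => by
    rw [he]; exact ⟨r, hr, rfl⟩
  -- the arc `vy` meets `T` only in `v` and the crossing point
  have hET : ∀ r ∈ Icc (0 : ℝ) 1, h r ∈ T → r = 0 ∨ r = t := by
    intro r hr hm
    rcases hm with (hm | hm) | hm
    · have := adj' D huv.symm hvy huy hm (hhE r hr)
      rw [← h0] at this
      exact Or.inl (hhi hr m0 this)
    · have := adj D hvx hvy hxy hm (hhE r hr)
      rw [← h0] at this
      exact Or.inl (hhi hr m0 this)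
    · have := (D.indep_arcs u x v y hux hvy huv huy hvx.symm hxy).1 ⟨hm, hhE r hr⟩
        ⟨hst ▸ hgB s ms, hhE t mt⟩
      exact Or.inr (hhi hr mt this)
  have hpre : ∀ I : Set ℝ, IsPreconnected I → I ⊆ Icc 0 1 → 0 ∉ I → t ∉ I →
      ∀ r ∈ I, h r ∈ KF → h '' I ⊆ KF := by
    intro I hI hsub n0 nt r hr hm
    rw [hKF, connectedComponentIn_eq hm]
    refine (hI.image h (hh.mono hsub)).subset_connectedComponentIn ⟨r, hr, rfl⟩ ?_
    rintro _ ⟨w, hw, rfl⟩ hwT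
    rcases hET w (hsub hw) hwT with rfl | rfl
    · exact n0 hw
    · exact nt hw
  have sub1 : Ioo 0 t ⊆ Icc (0 : ℝ) 1 := fun r hr => ⟨hr.1.le, hr.2.le.trans ht.2.le⟩
  have sub2 : Ioc t 1 ⊆ Icc (0 : ℝ) 1 := fun r hr => ⟨ht.1.le.trans hr.1.le, hr.2⟩
  have hqu : h t ≠ D.vtx u := fun hq => by
    rw [← hst, ← g0] at hq; exact hs.1.ne' (gi ms m0 hq)
  have hqx : h t ≠ D.vtx x := fun hq => by
    rw [← hst, ← g1] at hq; exact hs.2.ne (gi ms m1 hq)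
  have hqv : h t ≠ D.vtx v := fun hq => by
    rw [← h0] at hq; exact ht.1.ne' (hhi mt m0 hq)
  have hqB : h t ∈ D.arc u x := hst ▸ hgB s ms
  have hqT : h t ∈ T := Or.inr hqB
  -- the initial part of the arc `vy` is not in the outer component
  have claim : ∀ r ∈ Ioo 0 t, h r ∉ KF := by
    intro r hr hrK
    have hI1 := hpre _ isPreconnected_Ioo sub1 (fun h => lt_irrefl _ h.1)
      (fun h => lt_irrefl _ h.2) r hr hrK
    have hyT : h 1 ∉ T := fun hm => by
      rcases hET 1 m1 hm with h | h
      · exact one_ne_zero h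
      · exact ht.2.ne' h
    by_cases hy : h 1 ∈ KF
    · have hI2 := hpre _ isPreconnected_Ioc sub2 (fun h => not_lt.2 ht.1.le h.1)
        (fun h => lt_irrefl _ h.1) 1 ⟨ht.2, le_rfl⟩ hy
      have hEK : ∀ z ∈ D.arc v y, z ∉ T → z ∈ KF := by
        intro z hz hzT
        rw [he] at hz
        obtain ⟨w, hw, rfl⟩ := hz
        rcases lt_trichotomy w t with h | h | h
        · rcases hw.1.eq_or_lt with h' | h'
          · exfalso; apply hzT
            rw [← h', h0]; exact Or.inl (Or.inr (left_mem D hvx))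
          · exact hI1 ⟨w, ⟨h', h⟩, rfl⟩
        · subst h; exact absurd hqT hzT
        · exact hI2 ⟨w, ⟨h, hw.2⟩, rfl⟩
      have hcr := ((D.indep_arcs u x v y hux hvy huv huy hvx.symm hxy).2 (h t)
        ⟨hqB, hhE t mt⟩).1
      have hU : (D.arc u v ∪ D.arc v x)ᶜ ∈ 𝓝 (h t) := by
        refine ((arc_closed D huv).union (arc_closed D hvx)).isOpen_compl.mem_nhds ?_
        rintro (hm | hm)
        · exact hqu (adj D huv hux hvx hm hqB)
        · exact hqx (adj'' D hvx.symm hux.symm huv.symm hm hqB)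
      obtain ⟨V, hV, hVU, C₁, C₂, hCC, -, p1, p2, ne1, ne2⟩ := hcr.2.2 _ hU
      have hVT : C₁ ∪ C₂ ⊆ Tᶜ := by
        rw [← hCC]
        rintro z ⟨hz1, hz2⟩ ((hm | hm) | hm)
        · exact hVU hz1 (Or.inl hm)
        · exact hVU hz1 (Or.inr hm)
        · exact hz2 hm
      have hCK : ∀ Cc : Set SpherePt, Cc ⊆ C₁ ∪ C₂ → IsPreconnected Cc →
          (D.arc v y ∩ Cc).Nonempty → Cc ⊆ KF := by
        rintro Cc hsub hpc ⟨z, hz1, hz2⟩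
        have hz := hEK z hz1 (hVT (hsub hz2))
        rw [hKF, connectedComponentIn_eq hz]
        exact hpc.subset_connectedComponentIn hz2 (hsub.trans hVT)
      have hacc : h t ∈ closure (connectedComponentIn Tᶜ q') := by
        have := tri_acc D hux huv hvx.symm (a := q') hqB hqu hqx (by rwa [tri_rot])
        rwa [tri_rot] at this
      obtain ⟨z, hz1, hz2⟩ := mem_closure_iff_nhds.1 hacc V hV
      have hzT := connectedComponentIn_subset _ _ hz2
      have hzV : z ∈ C₁ ∪ C₂ := by
        rw [← hCC]; exact ⟨hz1, fun hm => hzT (Or.inr hm)⟩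
      have hzK : z ∈ KF := hzV.elim (fun hm => hCK C₁ subset_union_left p1 ne1 hm)
        (fun hm => hCK C₂ subset_union_right p2 ne2 hm)
      apply hq'
      rw [hKF, connectedComponentIn_eq hzK, ← connectedComponentIn_eq hz2]
      exact mem_connectedComponentIn hq'T
    · have hconv := hFC.2 u v x huv hux hvx (connectedComponentIn Tᶜ (h 1) ∪ T)
        ⟨h 1, hyT, rfl⟩ (by
          intro hsub
          rcases hsub hf0 with hm | hm
          · apply hy
            rw [hKF, ← connectedComponentIn_eq hm]
            exact mem_connectedComponentIn hyT
          · exact hFT hm)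
      have := hconv v y hvy (Or.inr (Or.inl (Or.inr (left_mem D hvx))))
        (Or.inl (h1 ▸ mem_connectedComponentIn hyT)) (hhE r (sub1 hr))
      rcases this with hm | hm
      · apply hy
        rw [hKF, connectedComponentIn_eq hrK, ← connectedComponentIn_eq hm]
        exact mem_connectedComponentIn hyT
      · exact connectedComponentIn_subset _ _ hrK hm
  -- the third closed curve
  set R := h '' Icc 0 t ∪ (D.arc v x ∪ g '' Icc s 1) with hR
  have hgs : g '' Icc s 1 ⊆ D.arc u x := by
    rintro _ ⟨w, hw, rfl⟩; exact hgB w ⟨hs.1.le.trans hw.1, hw.2⟩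
  have hg0s : g '' Icc 0 s ⊆ D.arc u x := by
    rintro _ ⟨w, hw, rfl⟩; exact hgB w ⟨hw.1, hw.2.trans hs.2.le⟩
  have hht : h '' Icc 0 t ⊆ D.arc v y := by
    rintro _ ⟨w, hw, rfl⟩; exact hhE w ⟨hw.1, hw.2.trans ht.2.le⟩
  have cE : IsClosed (h '' Icc 0 t) := closed_arc hh le_rfl ht.2.le
  have hRc : IsClosed R :=
    cE.union ((arc_closed D hvx).union (closed_arc hg hs.1.le le_rfl))
  have hpR : p ∉ R := by
    rintro (hm | hm | hm)
    · exact hpv (adj' D huv.symm hvy huy hp (hht hm))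
    · exact hpv (adj' D huv.symm hvx hux hp hm)
    · exact hpu (adj D huv hux hvx hp (hgs hm))
  have hKR : KF ⊆ Rᶜ := by
    rintro z hz (⟨w, hw, rfl⟩ | hm | hm)
    · rcases hw.1.eq_or_lt with h' | h'
      · apply connectedComponentIn_subset _ _ hz
        rw [← h', h0]; exact Or.inl (Or.inr (left_mem D hvx))
      rcases hw.2.eq_or_lt with h'' | h''
      · subst h''; exact connectedComponentIn_subset _ _ hz hqT
      · exact claim w ⟨h', h''⟩ hz
    · exact connectedComponentIn_subset _ _ hz (Or.inl (Or.inr hm))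
    · exact connectedComponentIn_subset _ _ hz (Or.inr (hgs hm))
  have hN : connectedComponentIn Rᶜ p ∈ 𝓝 p :=
    (isOpen_comp hRc p).mem_nhds (mem_connectedComponentIn hpR)
  refine ⟨_, hN, fun z hzp hzS => ?_⟩
  have hacc := tri_acc D huv hux hvx hp hpu hpv hFT
  obtain ⟨w, hw1, hw2⟩ := mem_closure_iff_nhds.1 hacc _ hN
  have hwR : w ∈ connectedComponentIn Rᶜ f0 :=
    isPreconnected_connectedComponentIn.subset_connectedComponentIn
      (mem_connectedComponentIn hFT) hKR hw2
  have hzR : z ∈ connectedComponentIn Rᶜ f0 := by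
    rw [connectedComponentIn_eq hwR, ← connectedComponentIn_eq hw1]; exact hzp
  have hSc : IsClosed (D.arc u v ∪ (g '' Icc 0 s ∪ h '' Icc 0 t)) :=
    (arc_closed D huv).union ((closed_arc hg le_rfl hs.2.le).union cE)
  have hv0 : D.vtx v ∈ h '' Icc 0 t := ⟨0, ⟨le_rfl, ht.1.le⟩, h0⟩
  have hinter : (D.arc u v ∪ (g '' Icc 0 s ∪ h '' Icc 0 t)) ∩ R = h '' Icc 0 t := by
    refine Subset.antisymm ?_ fun z hz => ⟨Or.inr (Or.inr hz), Or.inl hz⟩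
    rintro z ⟨hz1, hz2⟩
    rcases hz2 with hz2 | hz2 | hz2
    · exact hz2
    · rcases hz1 with hz1 | hz1 | hz1
      · rw [adj' D huv.symm hvx hux hz1 hz2]; exact hv0
      · exfalso
        have hzx := adj'' D hvx.symm hux.symm huv.symm hz2 (hg0s hz1)
        obtain ⟨w, hw, rfl⟩ := hz1
        rw [← g1] at hzx
        have := gi ⟨hw.1, hw.2.trans hs.2.le⟩ m1 hzx
        linarith [hw.2, hs.2]
      · exact hz1
    · rcases hz1 with hz1 | hz1 | hz1
      · exfalso
        have hzu := adj D huv hux hvx hz1 (hgs hz2)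
        obtain ⟨w, hw, rfl⟩ := hz2
        rw [← g0] at hzu
        have := gi ⟨hs.1.le.trans hw.1, hw.2⟩ m0 hzu
        linarith [hw.1, hs.1]
      · obtain ⟨w, hw, rfl⟩ := hz2
        obtain ⟨w', hw', hww⟩ := hz1
        have := gi ⟨hw'.1, hw'.2.trans hs.2.le⟩ ⟨hs.1.le.trans hw.1, hw.2⟩ hww
        have hws : w = s := le_antisymm (this ▸ hw'.2) hw.1
        rw [hws, hst]
        exact ⟨t, ⟨ht.1.le, le_rfl⟩, rfl⟩
      · exact hz1
  have hJ := janiszewski hSc hRc (by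
    rw [hinter]
    exact isPreconnected_Icc.image h (hh.mono (Icc_subset_Icc le_rfl ht.2.le))) hzS hzR
  refine connectedComponentIn_mono f0 (compl_subset_compl.2 ?_) hJ
  rintro z ((hm | hm) | hm)
  · exact Or.inl (Or.inl hm)
  · exact Or.inr (Or.inr (Or.inl hm))
  · rw [ge] at hm
    obtain ⟨w, hw, rfl⟩ := hm
    rcases le_total w s with hws | hws
    · exact Or.inl (Or.inr (Or.inl ⟨w, ⟨hw.1, hws⟩, rfl⟩))
    · exact Or.inr (Or.inr (Or.inr ⟨w, ⟨hws, hw.2⟩, rfl⟩))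

lemma side_point {F : Set SpherePt} {f0 : SpherePt} (hF : IsPreconnected F) (hf0 : f0 ∈ F)
    {T Δ : Set SpherePt} (hFT : F ⊆ Tᶜ) (hΔ : IsClosedSide T Δ) (hn : ¬ F ⊆ Δ) :
    ∃ q', q' ∉ T ∧ q' ∉ connectedComponentIn Tᶜ f0 ∧
      ∀ z ∈ Δ, z ∉ connectedComponentIn Tᶜ f0 := by
  obtain ⟨q', hq', rfl⟩ := hΔ
  have hd : ∀ z ∈ connectedComponentIn Tᶜ q', z ∉ connectedComponentIn Tᶜ f0 := by
    intro z hz hz'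
    apply hn
    refine Subset.trans ?_ subset_union_left
    rw [connectedComponentIn_eq hz, ← connectedComponentIn_eq hz']
    exact hF.subset_connectedComponentIn hf0 hFT
  refine ⟨q', hq', hd q' (mem_connectedComponentIn hq'), ?_⟩
  rintro z (hz | hz) hz'
  · exact hd z hz hz'
  · exact connectedComponentIn_subset _ _ hz' hz

lemma main {F : Set SpherePt} (hFC : D.FaceConvex F) {u v x y : Fin n}
    (huv : u ≠ v) (hux : u ≠ x) (huy : u ≠ y) (hvx : v ≠ x) (hvy : v ≠ y) (hxy : x ≠ y)
    {p : SpherePt} {C : Fin 2 → Set SpherePt} (hC : D.LocalSides u v p C)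
    {i j : Fin 2} (hij : i ≠ j)
    (hx : D.OnSide F u v p C i x) (hy : D.OnSide F u v p C j y) :
    ¬D.Crosses u x v y := by
  rintro ⟨q, ⟨hqB, hqE⟩, hqv⟩
  obtain ⟨hp, hpu, hpv, V, hV, hCV, -⟩ := hC
  obtain ⟨-, -, Δx, hΔx, hnx, Vx, hVx, hCx⟩ := hx
  obtain ⟨-, -, Δy, hΔy, hny, Vy, hVy, hCy⟩ := hy
  obtain ⟨f0, hf0, hFpre, hFim⟩ : ∃ f0 ∈ F, IsPreconnected F ∧ F ⊆ (D.image univ)ᶜ := by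
    obtain ⟨⟨c, hc, rfl⟩, -⟩ := hFC
    exact ⟨c, mem_connectedComponentIn hc, isPreconnected_connectedComponentIn,
      connectedComponentIn_subset _ _⟩
  have hFarc : ∀ a b : Fin n, a ≠ b → ∀ z ∈ F, z ∉ D.arc a b := by
    intro a b hab z hz hm
    refine hFim hz (Or.inr ?_)
    simp only [mem_iUnion]
    exact ⟨a, trivial, b, trivial, hab, hm⟩
  have hFtri : ∀ a b c : Fin n, a ≠ b → a ≠ c → b ≠ c → F ⊆ (D.tri a b c)ᶜ := by
    rintro a b c h1 h2 h3 z hz ((hm | hm) | hm)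
    · exact hFarc _ _ h1 z hz hm
    · exact hFarc _ _ h3 z hz hm
    · exact hFarc _ _ h2 z hz hm
  obtain ⟨qx, hqx, hqx', hdx⟩ := side_point hFpre hf0 (hFtri u v x huv hux hvx) hΔx hnx
  obtain ⟨qy, hqy, hqy', hdy⟩ := side_point hFpre hf0 (hFtri u v y huv huy hvy) hΔy hny
  obtain ⟨g, hg, gi, g0, g1, ge⟩ := D.isArc u x hux
  obtain ⟨h, hh, hhi, h0, h1, he⟩ := D.isArc v y hvy
  obtain ⟨s, hs, hsq⟩ := ge ▸ hqB
  obtain ⟨t, ht, htq⟩ := he ▸ hqE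
  have hs' : s ∈ Ioo (0 : ℝ) 1 := by
    refine ⟨lt_of_le_of_ne hs.1 fun hc => hqv ⟨u, ?_⟩, lt_of_le_of_ne hs.2 fun hc => hqv ⟨x, ?_⟩⟩
    · rw [← hsq, ← hc, g0]
    · rw [← hsq, hc, g1]
  have ht' : t ∈ Ioo (0 : ℝ) 1 := by
    refine ⟨lt_of_le_of_ne ht.1 fun hc => hqv ⟨v, ?_⟩, lt_of_le_of_ne ht.2 fun hc => hqv ⟨y, ?_⟩⟩
    · rw [← htq, ← hc, h0]
    · rw [← htq, hc, h1]
  obtain ⟨N₁, hN₁, H₁⟩ := half D hFC huv hux huy hvx hvy hxy hf0 hg gi g0 g1 ge hh hhi h0 h1 he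
    hs' ht' (hsq.trans htq.symm) hp hpu hpv hqx hqx'
  obtain ⟨N₂, hN₂, H₂⟩ := half D hFC huv.symm hvy hvx huy hux hxy.symm hf0 hh hhi h0 h1 he
    hg gi g0 g1 ge ht' hs' (htq.trans hsq.symm) (p := p) (by rwa [D.arc_symm]) hpv hpu
    (q' := qy) (by rwa [tri_swap]) (by rwa [tri_swap])
  rw [tri_swap, D.arc_symm v u, union_comm (h '' _)] at H₂
  -- the point `p` is in the closure of the component of `f0` for the small triangle
  have hgs : g '' Icc 0 s ⊆ D.arc u x := by
    rw [ge]; exact image_mono (Icc_subset_Icc le_rfl hs.2)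
  have hht : h '' Icc 0 t ⊆ D.arc v y := by
    rw [he]; exact image_mono (Icc_subset_Icc le_rfl ht.2)
  have hacc : p ∈ closure
      (connectedComponentIn (D.arc u v ∪ (g '' Icc 0 s ∪ h '' Icc 0 t))ᶜ f0) := by
    have hfS : f0 ∉ D.arc u v ∪ (g '' Icc 0 s ∪ h '' Icc 0 t) := by
      rintro (hm | hm | hm)
      · exact hFarc _ _ huv _ hf0 hm
      · exact hFarc _ _ hux _ hf0 (hgs hm)
      · exact hFarc _ _ hvy _ hf0 (hht hm)
    obtain ⟨f, hf, fi, e0, e1, fe⟩ := D.isArc u v huv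
    have hfA : ∀ r ∈ Icc (0 : ℝ) 1, f r ∈ D.arc u v := fun r hr => by rw [fe]; exact ⟨r, hr, rfl⟩
    rw [fe] at hfS ⊢
    obtain ⟨r, hr, hrp⟩ := fe ▸ hp
    have hr' : r ∈ Ioo (0 : ℝ) 1 := by
      refine ⟨lt_of_le_of_ne hr.1 fun hc => hpu ?_, lt_of_le_of_ne hr.2 fun hc => hpv ?_⟩
      · rw [← hrp, ← hc, e0]
      · rw [← hrp, hc, e1]
    rw [← hrp]
    have c1 : IsClosed (g '' Icc 0 s) := closed_arc hg le_rfl hs.2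
    have c2 : IsClosed (h '' Icc 0 t) := closed_arc hh le_rfl ht.2
    refine punct hf fi (c1.union c2) ?_ ?_ ?_ ?_ hr' hfS
    · refine jan_preconn c1 c2 ?_ (arc_preconn hg gi le_rfl hs.1 hs.2)
        (arc_preconn hh hhi le_rfl ht.1 ht.2)
      refine Subsingleton.isPreconnected ?_
      exact (D.indep_arcs u x v y hux hvy huv huy hvx.symm hxy).1.anti
        (inter_subset_inter hgs hht)
    · exact Or.inl ⟨0, ⟨le_rfl, hs.1⟩, g0.trans e0.symm⟩
    · exact Or.inr ⟨0, ⟨le_rfl, ht.1⟩, h0.trans e1.symm⟩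
    · intro w hw hm
      have hw' : w ∈ Icc (0 : ℝ) 1 := Ioo_subset_Icc_self hw
      rcases hm with hm | hm
      · have := adj D huv hux hvx (hfA w hw') (hgs hm)
        rw [← e0] at this
        exact hw.1.ne' (fi hw' (by simp) this)
      · have := adj' D huv.symm hvy huy (hfA w hw') (hht hm)
        rw [← e1] at this
        exact hw.2.ne (fi hw' (by simp) this)
  obtain ⟨z, ⟨⟨hz1, hz2⟩, hzV, hzx, hzy⟩, hzS⟩ := mem_closure_iff_nhds.1 hacc _
    (Filter.inter_mem (Filter.inter_mem hN₁ hN₂) (Filter.inter_mem hV (Filter.inter_mem hVx hVy)))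
  have hzA : z ∉ D.arc u v := fun hm => connectedComponentIn_subset _ _ hzS (Or.inl hm)
  have hzC : z ∈ C 0 ∪ C 1 := by rw [hCV]; exact ⟨hzV, hzA⟩
  have hzij : z ∈ C i ∨ z ∈ C j := by
    fin_cases i <;> fin_cases j <;> first | exact absurd rfl hij | exact hzC | exact hzC.symm
  rcases hzij with hm | hm
  · exact hdx z (hCx ⟨hm, hzx⟩) (H₁ z hz1 hzS)
  · exact hdy z (hCy ⟨hm, hzy⟩) (H₂ z hz2 hzS)

end drawing


end JC

/-- If `x` and `y` are on different sides of `uv`, then the drawing of the `K_4` on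
`u, v, x, y` minus the edge `xy` has no crossing: the arcs `D[ux]`, `D[vy]` do not
cross and the arcs `D[uy]`, `D[vx]` do not cross. -/
theorem no_crossing_of_differentSides (n : ℕ) (D : GoodDrawing n SpherePt)
    (F : Set SpherePt) (hFC : D.FaceConvex F) (u v x y : Fin n)
    (huv : u ≠ v) (hux : u ≠ x) (huy : u ≠ y) (hvx : v ≠ x) (hvy : v ≠ y) (hxy : x ≠ y)
    (p : SpherePt) (C : Fin 2 → Set SpherePt) (hC : D.LocalSides u v p C)
    (i j : Fin 2) (hij : i ≠ j)
    (hx : D.OnSide F u v p C i x) (hy : D.OnSide F u v p C j y) :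
    ¬D.Crosses u x v y ∧ ¬D.Crosses u y v x := by
  exact ⟨JC.main D hFC huv hux huy hvx hvy hxy hC hij hx hy,
    JC.main D hFC huv huy hux hvy hvx hxy.symm hC hij.symm hy hx⟩

end
end
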